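/- Let a > 0 with a ≠ 1, let n ≥ 2 be an integer, and let s ∈ ℝ. Assume there exists a constant C > 0, independent of f, such that for every radial function f ∈ C_c^∞(ℝⁿ \ {0}) one has ‖S^a f‖_{L²(ℝⁿ, L^∞(B))} ≤ C ‖f‖_{H^s(ℝⁿ)}. Then s ≥ a/4. -/

import Mathlib

open MeasureTheory Real
open scoped InnerProductSpace

noncomputable section

/-- The Fourier transform `f̂(ξ) = ∫ e^{-i x·ξ} f(x) dx` on `ℝⁿ`. -/
def FT (n : ℕ) (f : EuclideanSpace ℝ (Fin n) → ℂ) (ξ : EuclideanSpace ℝ (Fin n)) : ℂ :=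
  ∫ x, Complex.exp (-(Complex.I * ((⟪x, ξ⟫_ℝ : ℝ) : ℂ))) * f x

/-- The oscillatory integral `S^a f(x,t) = (2π)^{-n} ∫ e^{i(x·ξ + t|ξ|^a)} f̂(ξ) dξ`. -/
def Sosc (n : ℕ) (a : ℝ) (f : EuclideanSpace ℝ (Fin n) → ℂ)
    (x : EuclideanSpace ℝ (Fin n)) (t : ℝ) : ℂ :=
  (((2 * π) ^ n : ℝ) : ℂ)⁻¹ *
    ∫ ξ, Complex.exp (Complex.I * ((⟪x, ξ⟫_ℝ + t * ‖ξ‖ ^ a : ℝ) : ℂ)) * FT n f ξ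

section SchrodingerMaximal

open Filter Topology
open scoped FourierTransform SchwartzMap ContDiff ENNReal

set_option linter.unusedSectionVars false

variable {E : Type*} [NormedAddCommGroup E] [InnerProductSpace ℝ E] [FiniteDimensional ℝ E]
  [MeasurableSpace E] [BorelSpace E]

/-- The `L²` Fourier transform of an integrable function is given by the Fourier integral. -/
theorem fourier_ae_eq_Lp_fourier {h : E → ℂ} (h1 : Integrable h) (h2 : MemLp h 2) :
    𝓕 h =ᵐ[volume] (𝓕 h2.toLp : Lp ℂ 2 (volume : Measure E)) := by
  have hc : Continuous (𝓕 h) :=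
    VectorFourier.fourierIntegral_continuous Real.continuous_fourierChar
      (by exact continuous_inner) h1
  refine ae_eq_of_integral_contDiff_smul_eq hc.locallyIntegrable
    ((Lp.memLp _).locallyIntegrable (by norm_num)) fun g gs gc => ?_
  have hg₁ : HasCompactSupport (Complex.ofRealCLM ∘ g) := gc.comp_left rfl
  have hg₂ : ContDiff ℝ ∞ (Complex.ofRealCLM ∘ g) := by fun_prop
  set φ : 𝓢(E, ℂ) := hg₁.toSchwartzMap hg₂ with hφ
  have key := DFunLike.congr_fun (Lp.fourier_toTemperedDistribution_eq h2.toLp) φ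
  have e1 : ∫ x, 𝓕 φ x • h x = ∫ x, φ x • 𝓕 h x := by
    have := VectorFourier.integral_fourierIntegral_smul_eq_flip (L := innerₗ E)
      (μ := volume) (ν := volume) Real.continuous_fourierChar (by exact continuous_inner)
      φ.integrable h1
    simpa [SchwartzMap.fourier_coe] using! this
  have e2 : ∫ x, 𝓕 φ x • h x = ∫ x, 𝓕 φ x • h2.toLp h x := by
    refine integral_congr_ae ?_
    filter_upwards [h2.coeFn_toLp] with x hx
    rw [hx]
  simp only [TemperedDistribution.fourier_apply, Lp.toTemperedDistribution_apply] at key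
  calc ∫ x, g x • 𝓕 h x = ∫ x, φ x • 𝓕 h x := by simp [hφ]
    _ = _ := by rw [← e1, e2, key]
    _ = _ := by simp [hφ]

theorem eLpNorm_fourier_eq {h : E → ℂ} (h1 : Integrable h) (h2 : MemLp h 2) :
    eLpNorm (𝓕 h) 2 = eLpNorm h 2 := by
  rw [eLpNorm_congr_ae (fourier_ae_eq_Lp_fourier h1 h2), ← eLpNorm_congr_ae h2.coeFn_toLp]
  have := Lp.norm_fourier_eq (h2.toLp)
  rw [Lp.norm_def, Lp.norm_def, ENNReal.toReal_eq_toReal_iff' (Lp.eLpNorm_ne_top _)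
    (Lp.eLpNorm_ne_top _)] at this
  exact this

/-- Plancherel's identity for the inverse Fourier integral on `L¹ ∩ L²`. -/
theorem lintegral_fourierInv_sq {h : E → ℂ} (h1 : Integrable h) (h2 : MemLp h 2) :
    ∫⁻ x, ‖𝓕⁻ h x‖ₑ ^ 2 = ∫⁻ x, ‖h x‖ₑ ^ 2 := by
  have key := eLpNorm_fourier_eq h1 h2
  simp only [eLpNorm_eq_lintegral_rpow_enorm_toReal (p := 2) (by norm_num) (by norm_num)] at key
  have := ENNReal.rpow_left_injective (x := 1 / (2 : ℝ≥0∞).toReal) (by norm_num) key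
  simp only [ENNReal.toReal_ofNat, ENNReal.rpow_ofNat] at this
  rw [← this, ← lintegral_neg_eq_self (fun x => ‖𝓕⁻ h x‖ₑ ^ 2)]
  simp_rw [Real.fourierInv_eq_fourier_neg, neg_neg]

/-- The multiplier `e^{iτ|η|^a}`. -/
def wave (a τ : ℝ) (η : E) : ℂ := Complex.exp ((τ * ‖η‖ ^ a : ℝ) * Complex.I)

/-- The inverse Fourier transform of `e^{iτ|η|^a} F(η)`, at the point `x`. -/
def propagate (a : ℝ) (F : E → ℂ) (x : E) (τ : ℝ) : ℂ := 𝓕⁻ (fun η => wave a τ η * F η) x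

theorem norm_wave (a τ : ℝ) (η : E) : ‖wave a τ η‖ = 1 := Complex.norm_exp_ofReal_mul_I _

theorem continuous_wave {a : ℝ} (ha : 0 < a) : Continuous fun p : ℝ × E => wave a p.1 p.2 := by
  unfold wave
  have : Continuous fun p : ℝ × E => ‖p.2‖ ^ a :=
    continuous_snd.norm.rpow_const fun _ => Or.inr ha.le
  fun_prop

theorem propagate_eq (a : ℝ) (F : E → ℂ) (x : E) (τ : ℝ) :
    propagate a F x τ
      = ∫ η, Complex.exp ((2 * π * ⟪η, x⟫_ℝ : ℝ) * Complex.I) * (wave a τ η * F η) := by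
  rw [propagate, Real.fourierInv_eq']
  rfl

theorem integrable_wave_mul {a : ℝ} (ha : 0 < a) {F : E → ℂ} (hF : Integrable F) (τ : ℝ) :
    Integrable fun η => wave a τ η * F η := by
  refine hF.bdd_mul (c := 1) ?_ (ae_of_all _ fun η => (norm_wave a τ η).le)
  exact ((continuous_wave ha).comp
    (by fun_prop : Continuous fun η : E => (τ, η))).aestronglyMeasurable

theorem continuous_propagate {a : ℝ} (ha : 0 < a) {F : E → ℂ} (hF : Integrable F) :
    Continuous fun p : E × ℝ => propagate a F p.1 p.2 := by
  simp_rw [propagate_eq]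
  refine continuous_of_dominated (bound := fun η => ‖F η‖) (fun p => ?_) (fun p => ?_) hF.norm ?_
  · exact (by fun_prop : Continuous fun η : E =>
      Complex.exp ((2 * π * ⟪η, p.1⟫_ℝ : ℝ) * Complex.I)).aestronglyMeasurable.mul
      (integrable_wave_mul ha hF _).aestronglyMeasurable
  · refine ae_of_all _ fun η => ?_
    rw [norm_mul, norm_mul, norm_wave, Complex.norm_exp_ofReal_mul_I, one_mul, one_mul]
  · refine ae_of_all _ fun η => ?_
    have := (continuous_wave (E := E) ha).comp
      (by fun_prop : Continuous fun p : E × ℝ => (p.2, η))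
    refine Continuous.mul (by fun_prop) (Continuous.mul this continuous_const)

theorem norm_propagate_le (a : ℝ) (F : E → ℂ) (x : E) (τ : ℝ) :
    ‖propagate a F x τ‖ ≤ ∫ η, ‖F η‖ := by
  rw [propagate_eq]
  refine (norm_integral_le_integral_norm _).trans_eq ?_
  simp_rw [norm_mul, norm_wave, Complex.norm_exp_ofReal_mul_I, one_mul]

theorem lintegral_propagate_sq {a : ℝ} (ha : 0 < a) {F : E → ℂ} (h1 : Integrable F)
    (h2 : MemLp F 2) (τ : ℝ) :
    ∫⁻ x, ‖propagate a F x τ‖ₑ ^ 2 = ∫⁻ η, ‖F η‖ₑ ^ 2 := by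
  have hi := integrable_wave_mul ha h1 τ
  have := lintegral_fourierInv_sq hi (h2.of_le hi.aestronglyMeasurable
    (ae_of_all _ fun η => by rw [norm_mul, norm_wave, one_mul]))
  simpa only [enorm_mul, ← ofReal_norm (wave a τ _), norm_wave, ENNReal.ofReal_one,
    one_mul, propagate] using this

theorem hasDerivAt_propagate {a : ℝ} (ha : 0 < a) {F G : E → ℂ} (h1 : Integrable F)
    (hG : ∀ η, G η = ((‖η‖ ^ a : ℝ) : ℂ) * F η) (h1' : Integrable G) (x : E) (τ : ℝ) :
    HasDerivAt (propagate a F x) (Complex.I * propagate a G x τ) τ := by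
  have hm : ∀ (H : E → ℂ), Integrable H → ∀ r, Integrable fun η : E =>
      Complex.exp ((2 * π * ⟪η, x⟫_ℝ : ℝ) * Complex.I) * (wave a r η * H η) := fun H hH r =>
    (integrable_wave_mul ha hH r).bdd_mul (c := 1)
      (by fun_prop : Continuous fun η : E =>
        Complex.exp ((2 * π * ⟪η, x⟫_ℝ : ℝ) * Complex.I)).aestronglyMeasurable
      (ae_of_all _ fun η => (Complex.norm_exp_ofReal_mul_I _).le)
  have hw : ∀ η : E, ∀ r : ℝ, HasDerivAt (fun r : ℝ => wave a r η)
      (wave a r η * (((‖η‖ ^ a : ℝ) : ℂ) * Complex.I)) r := by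
    intro η r
    have : HasDerivAt (fun r : ℝ => ((r * ‖η‖ ^ a : ℝ) : ℂ) * Complex.I)
        (((‖η‖ ^ a : ℝ) : ℂ) * Complex.I) r := by
      have := ((hasDerivAt_id r).mul_const (‖η‖ ^ a)).ofReal_comp.mul_const Complex.I
      simpa using this
    exact this.cexp
  have key := hasDerivAt_integral_of_dominated_loc_of_deriv_le (μ := (volume : Measure E))
      (s := Set.univ) (x₀ := τ)
      (F := fun r η => Complex.exp ((2 * π * ⟪η, x⟫_ℝ : ℝ) * Complex.I) * (wave a r η * F η))
      (F' := fun r η => Complex.I *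
        (Complex.exp ((2 * π * ⟪η, x⟫_ℝ : ℝ) * Complex.I) * (wave a r η * G η)))
      (bound := fun η => ‖G η‖) Filter.univ_mem
      (.of_forall fun r => (hm F h1 r).aestronglyMeasurable) (hm F h1 τ)
      ((hm G h1' τ).aestronglyMeasurable.const_mul _)
      (ae_of_all _ fun η r _ => by
        rw [norm_mul, norm_mul, norm_mul, norm_wave, Complex.norm_exp_ofReal_mul_I,
          Complex.norm_I, one_mul, one_mul, one_mul]) h1'.norm
      (ae_of_all _ fun η r _ => by
        refine (((hw η r).mul_const (F η)).const_mul
          (Complex.exp ((2 * π * ⟪η, x⟫_ℝ : ℝ) * Complex.I))).congr_deriv ?_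
        rw [hG]
        ring)
  have e := key.2
  rw [integral_const_mul, ← propagate_eq] at e
  rw [funext (propagate_eq a F x)]
  exact e

/-- Differentiation in time, in integrated form. -/
theorem propagate_sub {a : ℝ} (ha : 0 < a) {F G : E → ℂ} (h1 : Integrable F)
    (hG : ∀ η, G η = ((‖η‖ ^ a : ℝ) : ℂ) * F η) (h1' : Integrable G) (x : E) (τ : ℝ) :
    propagate a F x τ - propagate a F x 0
      = ∫ r in (0 : ℝ)..τ, Complex.I * propagate a G x r := by
  have h0 := (continuous_propagate ha h1').comp (by fun_prop : Continuous fun r : ℝ => (x, r))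
  have hc : Continuous fun r : ℝ => Complex.I * propagate a G x r := h0.const_mul _
  have hd := hasDerivAt_propagate ha h1 hG h1' x
  generalize propagate a F x = u at *
  generalize propagate a G x = v at *
  exact (intervalIntegral.integral_eq_sub_of_hasDerivAt (fun r _ => hd r)
    (hc.intervalIntegrable _ _)).symm

/-- A square integrable majorant for the maximal function, from Sobolev embedding in time. -/
theorem exists_majorant {a : ℝ} (ha : 0 < a) {F : E → ℂ} (h1 : Integrable F) (h2 : MemLp F 2)
    (h1' : Integrable fun η => ((‖η‖ ^ a : ℝ) : ℂ) * F η)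
    (h2' : MemLp (fun η => ((‖η‖ ^ a : ℝ) : ℂ) * F η) 2) (b : ℝ) :
    ∃ Φ : E → ℝ≥0∞, ∫⁻ x, Φ x < ⊤ ∧ ∀ x τ, |τ| ≤ b → ‖propagate a F x τ‖ₑ ^ 2 ≤ Φ x := by
  set G : E → ℂ := fun η => ((‖η‖ ^ a : ℝ) : ℂ) * F η
  have fin2 : ∀ H : E → ℂ, MemLp H 2 → ∫⁻ η, ‖H η‖ₑ ^ 2 < ⊤ := fun H hH => by
    have := lintegral_rpow_enorm_lt_top_of_eLpNorm_lt_top (by norm_num) (by norm_num) hH.2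
    simpa using this
  have hGc := continuous_propagate ha h1'
  refine ⟨fun x => 2 * ‖propagate a F x 0‖ₑ ^ 2 + 2 * (ENNReal.ofReal (2 * b) *
    ∫⁻ r in Set.Icc (-b) b, ‖propagate a G x r‖ₑ ^ 2), ?_, fun x τ hτ => ?_⟩
  · have hm : Measurable fun x => 2 * ‖propagate a F x 0‖ₑ ^ 2 := by
      have := (continuous_propagate ha h1).comp (by fun_prop : Continuous fun x : E => (x, (0:ℝ)))
      exact (this.measurable.enorm.pow_const 2).const_mul 2
    have hm2 : Measurable fun p : E × ℝ => ‖propagate a G p.1 p.2‖ₑ ^ 2 :=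
      hGc.measurable.enorm.pow_const 2
    rw [lintegral_add_left hm, lintegral_const_mul' _ _ (by norm_num),
      lintegral_const_mul' _ _ (by norm_num), lintegral_const_mul' _ _ ENNReal.ofReal_ne_top,
      lintegral_lintegral_swap hm2.aemeasurable, lintegral_propagate_sq ha h1 h2]
    simp_rw [lintegral_propagate_sq ha h1' h2']
    rw [setLIntegral_const]
    have f1 := (fin2 F h2).ne
    have f2 := (fin2 G h2').ne
    exact ENNReal.add_lt_top.2 ⟨(ENNReal.mul_ne_top (by norm_num) f1).lt_top,
      (ENNReal.mul_ne_top (by norm_num) (ENNReal.mul_ne_top ENNReal.ofReal_ne_top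
        (ENNReal.mul_ne_top f2 (by simp)))).lt_top⟩
  · have hle : ‖propagate a F x τ‖ₑ ≤ ‖propagate a F x 0‖ₑ
        + ∫⁻ r in Set.Icc (-b) b, ‖propagate a G x r‖ₑ := by
      have e : propagate a F x τ = propagate a F x 0
          + ∫ r in (0 : ℝ)..τ, Complex.I * propagate a G x r := by
        rw [← propagate_sub ha h1 (fun _ => rfl) h1' x τ]; ring
      rw [e]
      refine (enorm_add_le _ _).trans (add_le_add le_rfl ?_)
      have e2 : ‖∫ r in (0 : ℝ)..τ, Complex.I * propagate a G x r‖ₑ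
          = ‖∫ r in Set.uIoc 0 τ, Complex.I * propagate a G x r‖ₑ := by
        rw [← ofReal_norm, ← ofReal_norm,
          intervalIntegral.norm_intervalIntegral_eq]
      rw [e2]
      refine (enorm_integral_le_lintegral_enorm _).trans ?_
      simp only [enorm_mul, ← ofReal_norm Complex.I, Complex.norm_I, ENNReal.ofReal_one,
        one_mul]
      refine lintegral_mono_set ?_
      rw [abs_le] at hτ
      refine Set.uIoc_subset_uIcc.trans (Set.uIcc_subset_Icc ⟨?_, ?_⟩ hτ) <;> linarith
    have hcs : (∫⁻ r in Set.Icc (-b) b, ‖propagate a G x r‖ₑ) ^ 2 ≤ ENNReal.ofReal (2 * b) *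
        ∫⁻ r in Set.Icc (-b) b, ‖propagate a G x r‖ₑ ^ 2 := by
      have hm : AEMeasurable (fun r => ‖propagate a G x r‖ₑ)
          (volume.restrict (Set.Icc (-b) b)) :=
        (hGc.comp (by fun_prop : Continuous fun r : ℝ => (x, r))).measurable.enorm.aemeasurable
      have := ENNReal.lintegral_mul_le_Lp_mul_Lq (volume.restrict (Set.Icc (-b) b))
        Real.HolderConjugate.two_two (aemeasurable_const (b := (1 : ℝ≥0∞))) hm
      simp only [Pi.mul_apply, one_mul, ENNReal.one_rpow, lintegral_const,
        Measure.restrict_apply_univ, Real.volume_Icc, sub_neg_eq_add, ← two_mul] at this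
      calc _ ≤ _ := pow_le_pow_left' this 2
        _ = _ := by
          have e : (1 / 2 : ℝ) * ((2 : ℕ) : ℝ) = 1 := by norm_num
          rw [mul_pow, ← ENNReal.rpow_mul_natCast, ← ENNReal.rpow_mul_natCast, e,
            ENNReal.rpow_one, ENNReal.rpow_one]
          simp_rw [ENNReal.rpow_ofNat]
    calc _ ≤ (‖propagate a F x 0‖ₑ + ∫⁻ r in Set.Icc (-b) b, ‖propagate a G x r‖ₑ) ^ 2 :=
          pow_le_pow_left' hle 2
      _ ≤ 2 * (‖propagate a F x 0‖ₑ ^ 2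
          + (∫⁻ r in Set.Icc (-b) b, ‖propagate a G x r‖ₑ) ^ 2) := by
          have := ENNReal.rpow_add_le_mul_rpow_add_rpow (‖propagate a F x 0‖ₑ)
            (∫⁻ r in Set.Icc (-b) b, ‖propagate a G x r‖ₑ) (p := 2) (by norm_num)
          norm_num at this
          exact this
      _ ≤ _ := by rw [mul_add]; exact add_le_add le_rfl (mul_le_mul_right hcs 2)

/-- Radial test functions supported away from the origin. -/
structure IsRadialTest {E : Type*} [NormedAddCommGroup E] [InnerProductSpace ℝ E]
    (f : E → ℂ) : Prop where
  contDiff : ContDiff ℝ (⊤ : ℕ∞) f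
  hasCompactSupport : HasCompactSupport f
  zero_notMem : (0 : E) ∉ tsupport f
  radial : ∀ x y : E, ‖x‖ = ‖y‖ → f x = f y

theorem fourier_dilate (f : E → ℂ) {l : ℝ} (hl : 0 < l) (η : E) :
    𝓕 (fun x => f (l • x)) η = (((l ^ Module.finrank ℝ E)⁻¹ : ℝ) : ℂ) * 𝓕 f (l⁻¹ • η) := by
  rw [Real.fourier_eq', Real.fourier_eq']
  have := Measure.integral_comp_smul (volume : Measure E)
    (fun v => Complex.exp (((-2 * π * ⟪v, l⁻¹ • η⟫_ℝ : ℝ) : ℂ) * Complex.I) • f v) l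
  rw [abs_of_pos (by positivity), Complex.real_smul] at this
  rw [← this]
  refine integral_congr_ae (ae_of_all _ fun v => ?_)
  simp only [real_inner_smul_left, real_inner_smul_right]
  congr 4
  field_simp

theorem propagate_dilate {a : ℝ} (f : E → ℂ) {l : ℝ} (hl : 0 < l) (x : E) (τ : ℝ) :
    propagate a (𝓕 fun x => f (l • x)) x τ = propagate a (𝓕 f) (l • x) (l ^ a * τ) := by
  rw [propagate_eq, propagate_eq]
  have := Measure.integral_comp_smul (volume : Measure E)
    (fun η => Complex.exp ((2 * π * ⟪η, l • x⟫_ℝ : ℝ) * Complex.I)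
      * (wave a (l ^ a * τ) η * 𝓕 f η)) l⁻¹
  rw [inv_pow, inv_inv, abs_of_pos (by positivity), Complex.real_smul] at this
  have hl' : ((l ^ Module.finrank ℝ E : ℝ) : ℂ) ≠ 0 := by
    exact_mod_cast (by positivity : l ^ Module.finrank ℝ E ≠ 0)
  refine mul_left_cancel₀ hl' (Eq.trans ?_ this)
  rw [← integral_const_mul]
  refine integral_congr_ae (ae_of_all _ fun η => ?_)
  simp only [real_inner_smul_left, real_inner_smul_right, fourier_dilate f hl]
  have e1 : l * (l⁻¹ * ⟪η, x⟫_ℝ) = ⟪η, x⟫_ℝ := by field_simp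
  have e2 : wave a (l ^ a * τ) (l⁻¹ • η) = wave a τ η := by
    unfold wave
    rw [norm_smul, norm_inv, Real.norm_of_nonneg hl.le,
      Real.mul_rpow (by positivity) (norm_nonneg _), Real.inv_rpow hl.le]
    have : l ^ a ≠ 0 := by positivity
    have : l ^ a * τ * ((l ^ a)⁻¹ * ‖η‖ ^ a) = τ * ‖η‖ ^ a := by field_simp
    rw [this]
  rw [e1, e2]
  push_cast at hl' ⊢
  field_simp

theorem FT_eq {n : ℕ} (f : EuclideanSpace ℝ (Fin n) → ℂ) (ξ : EuclideanSpace ℝ (Fin n)) :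
    FT n f ξ = 𝓕 f ((2 * π)⁻¹ • ξ) := by
  rw [Real.fourier_eq', FT]
  refine integral_congr_ae (ae_of_all _ fun v => ?_)
  simp only [real_inner_smul_right, smul_eq_mul]
  congr 2
  have : (π : ℂ) ≠ 0 := by exact_mod_cast pi_ne_zero
  push_cast
  field_simp

theorem Sosc_eq {n : ℕ} (a : ℝ) (f : EuclideanSpace ℝ (Fin n) → ℂ)
    (x : EuclideanSpace ℝ (Fin n)) (t : ℝ) :
    Sosc n a f x t = propagate a (𝓕 f) x ((2 * π) ^ a * t) := by
  rw [propagate_eq, Sosc]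
  have := Measure.integral_comp_smul (volume : Measure (EuclideanSpace ℝ (Fin n)))
    (fun η => Complex.exp ((2 * π * ⟪η, x⟫_ℝ : ℝ) * Complex.I)
      * (wave a ((2 * π) ^ a * t) η * 𝓕 f η)) (2 * π)⁻¹
  rw [inv_pow, inv_inv, abs_of_pos (by positivity), Complex.real_smul,
    finrank_euclideanSpace_fin] at this
  have hl' : (((2 * π) ^ n : ℝ) : ℂ) ≠ 0 := by
    exact_mod_cast (by positivity : (2 * π) ^ n ≠ 0)
  refine mul_left_cancel₀ hl' (Eq.trans ?_ this)
  rw [mul_inv_cancel_left₀ hl']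
  refine integral_congr_ae (ae_of_all _ fun η => ?_)
  simp only [FT_eq]
  rw [← mul_assoc]
  congr 1
  unfold wave
  rw [← Complex.exp_add]
  congr 1
  rw [norm_smul, norm_inv, Real.norm_of_nonneg (by positivity),
    Real.mul_rpow (by positivity) (norm_nonneg _), Real.inv_rpow (by positivity),
    real_inner_smul_left, real_inner_comm]
  have h1 : (2 * π) * ((2 * π)⁻¹ * ⟪η, x⟫_ℝ) = ⟪η, x⟫_ℝ := by field_simp
  have h2 : (2 * π) ^ a * t * (((2 * π) ^ a)⁻¹ * ‖η‖ ^ a) = t * ‖η‖ ^ a := by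
    have : (2 * π) ^ a ≠ 0 := by positivity
    field_simp
  rw [h1, h2]
  push_cast
  ring

theorem IsRadialTest.dilate {f : E → ℂ} (hf : IsRadialTest f) {l : ℝ} (hl : 0 < l) :
    IsRadialTest fun x => f (l • x) where
  contDiff := hf.contDiff.comp (contDiff_const_smul l)
  hasCompactSupport := hf.hasCompactSupport.comp_smul hl.ne'
  zero_notMem := by
    have := hf.zero_notMem
    rw [notMem_tsupport_iff_eventuallyEq] at this ⊢
    have ht : Tendsto (fun x : E => l • x) (𝓝 0) (𝓝 0) := by
      have : Continuous fun x : E => l • x := by fun_prop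
      simpa using this.tendsto 0
    exact ht.eventually this
  radial x y h := hf.radial _ _ (by rw [norm_smul, norm_smul, h])

/-- Fourier transforms of test functions, multiplied by `|η|^a`, are integrable and square
integrable. -/
theorem SchwartzMap.rpow_mul_integrable_memLp {a : ℝ} (ha : 0 ≤ a) (F : 𝓢(E, ℂ)) :
    Integrable (fun η => ((‖η‖ ^ a : ℝ) : ℂ) * F η) ∧
      MemLp (fun η => ((‖η‖ ^ a : ℝ) : ℂ) * F η) 2 := by
  set m := ⌈a⌉₊
  have hle : ∀ η : E, ‖η‖ ^ a ≤ 1 + ‖η‖ ^ m := fun η => by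
    rcases le_total ‖η‖ 1 with h | h
    · have := Real.rpow_le_one (norm_nonneg η) h ha
      have : 0 ≤ ‖η‖ ^ m := by positivity
      linarith
    · have := Real.rpow_le_rpow_of_exponent_le h (Nat.le_ceil a)
      rw [Real.rpow_natCast] at this
      linarith
  have hb : ∀ η : E, ‖((‖η‖ ^ a : ℝ) : ℂ) * F η‖ ≤ ‖F η‖ + ‖η‖ ^ m * ‖F η‖ := fun η => by
    rw [norm_mul, Complex.norm_real, Real.norm_of_nonneg (by positivity)]
    have := mul_le_mul_of_nonneg_right (hle η) (norm_nonneg (F η))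
    linarith
  have hm : AEStronglyMeasurable (fun η : E => ((‖η‖ ^ a : ℝ) : ℂ) * F η) := by
    have : Continuous fun η : E => ‖η‖ ^ a := continuous_norm.rpow_const fun _ => Or.inr ha
    exact (by fun_prop : Continuous fun η : E => ((‖η‖ ^ a : ℝ) : ℂ) * F η).aestronglyMeasurable
  have hi : Integrable (fun η => ((‖η‖ ^ a : ℝ) : ℂ) * F η) :=
    (F.integrable.norm.add (F.integrable_pow_mul volume m)).mono' hm (ae_of_all _ hb)
  obtain ⟨C0, h0⟩ := F.decay 0 0
  obtain ⟨C1, h1⟩ := F.decay m 0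
  refine ⟨hi, (memLp_two_iff_integrable_sq_norm hm).2 ?_⟩
  refine (hi.norm.const_mul (C0 + C1)).mono' (hm.norm.pow 2) (ae_of_all _ fun η => ?_)
  have h0 := h0.2 η
  have h1 := h1.2 η
  simp only [pow_zero, one_mul, norm_iteratedFDeriv_zero] at h0 h1
  rw [norm_pow, norm_norm, sq]
  exact mul_le_mul_of_nonneg_right ((hb η).trans (add_le_add h0 h1)) (norm_nonneg _)

theorem IsRadialTest.exists_schwartz {f : E → ℂ} (hf : IsRadialTest f) :
    ∃ φ : 𝓢(E, ℂ), f = φ :=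
  ⟨hf.hasCompactSupport.toSchwartzMap hf.contDiff, by ext; simp⟩

theorem lintegral_dilate (f : E → ℝ≥0∞) {r : ℝ} (hr : 0 < r) :
    ∫⁻ x : E, f (r • x) = ENNReal.ofReal ((r ^ Module.finrank ℝ E)⁻¹) * ∫⁻ x, f x := by
  have h := Measure.map_addHaar_smul (volume : Measure E) hr.ne'
  rw [abs_of_pos (by positivity)] at h
  have e := (Homeomorph.smulOfNeZero r hr.ne' : E ≃ₜ E).measurableEmbedding.lintegral_map
    (μ := volume) f
  have h' : Measure.map (Homeomorph.smulOfNeZero r hr.ne' : E ≃ₜ E) (volume : Measure E)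
      = ENNReal.ofReal ((r ^ Module.finrank ℝ E)⁻¹) • volume := h
  rw [h', lintegral_smul_measure] at e
  exact e.symm

theorem sobolev_weight_le {s σ l A : ℝ} {k : ℕ} (hs : s ≤ σ) (h0 : 0 ≤ σ) (hk : σ ≤ 2 * k)
    (hl : 1 ≤ l) (hA : 0 ≤ A) :
    (1 + l ^ 2 * A) ^ s ≤ l ^ (2 * σ) * ((1 + A) ^ k) ^ 2 := by
  have hl2 : 1 ≤ l ^ 2 := one_le_pow₀ hl
  calc (1 + l ^ 2 * A) ^ s ≤ (1 + l ^ 2 * A) ^ σ :=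
        Real.rpow_le_rpow_of_exponent_le (by nlinarith) hs
    _ ≤ (l ^ 2 * (1 + A)) ^ σ := Real.rpow_le_rpow (by positivity) (by nlinarith) h0
    _ = l ^ (2 * σ) * (1 + A) ^ σ := by
        rw [Real.mul_rpow (by positivity) (by positivity), ← Real.rpow_natCast_mul (by positivity)]
        norm_num
    _ ≤ l ^ (2 * σ) * (1 + A) ^ (2 * k : ℝ) := by
        gcongr
        linarith
    _ = _ := by
        rw [← pow_mul, mul_comm k 2, ← Real.rpow_natCast (1 + A) (2 * k)]
        norm_num

/-- The maximal estimate at scale `l`, for times up to `l ^ a`. -/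
theorem maximal_bound {n : ℕ} {a s C : ℝ} (ha : 0 < a) (hC : 0 < C)
    (h : ∀ f : EuclideanSpace ℝ (Fin n) → ℂ, IsRadialTest f →
      (∫ x, (⨆ t : Set.Ioo (-1 : ℝ) 1, ‖Sosc n a f x t‖) ^ 2) ^ (1/2 : ℝ)
        ≤ C * (∫ ξ, (1 + ‖ξ‖ ^ 2) ^ s * ‖FT n f ξ‖ ^ 2) ^ (1/2 : ℝ))
    {k : ℕ} {σ : ℝ} (hs : s ≤ σ) (h0 : 0 ≤ σ) (hk : σ ≤ 2 * k) {l : ℝ} (hl : 1 ≤ l)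
    {f : EuclideanSpace ℝ (Fin n) → ℂ} (hf : IsRadialTest f) :
    ∃ M : EuclideanSpace ℝ (Fin n) → ℝ≥0∞, Measurable M ∧
      (∀ x τ, |τ| < l ^ a → ‖propagate a (𝓕 f) x τ‖ₑ ≤ M x) ∧
      ∫⁻ x, M x ^ 2 ≤ ENNReal.ofReal (C ^ 2 * (2 * π) ^ n * l ^ (2 * σ)) *
        ∫⁻ η, ‖(((1 + (2 * π * ‖η‖) ^ 2) ^ k : ℝ) : ℂ) * 𝓕 f η‖ₑ ^ 2 := by
  have hl0 : 0 < l := by linarith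
  set g : EuclideanSpace ℝ (Fin n) → ℂ := fun x => f (l • x) with hg
  have hgt : IsRadialTest g := hf.dilate hl0
  obtain ⟨φ, hφ⟩ := hgt.exists_schwartz
  have hF : 𝓕 g = 𝓕 φ := by rw [hφ, SchwartzMap.fourier_coe]
  have i1 : Integrable (𝓕 g) := by rw [hF]; exact (𝓕 φ).integrable
  have i2 : MemLp (𝓕 g) 2 := by rw [hF]; exact (𝓕 φ).memLp 2 volume
  have i3 : Integrable (fun η => ((‖η‖ ^ a : ℝ) : ℂ) * 𝓕 g η) ∧
      MemLp (fun η => ((‖η‖ ^ a : ℝ) : ℂ) * 𝓕 g η) 2 := by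
    rw [hF]; exact (𝓕 φ).rpow_mul_integrable_memLp ha.le
  set N : EuclideanSpace ℝ (Fin n) → ℝ := fun x => ⨆ t : Set.Ioo (-1 : ℝ) 1, ‖Sosc n a g x t‖
    with hN
  have hbdd : ∀ x, BddAbove (Set.range fun t : Set.Ioo (-1 : ℝ) 1 => ‖Sosc n a g x t‖) := fun x =>
    ⟨∫ η, ‖𝓕 g η‖, by rintro _ ⟨t, rfl⟩; simp only [Sosc_eq]; exact norm_propagate_le _ _ _ _⟩
  have hleN : ∀ x, ∀ t : ℝ, |t| < 1 → ‖Sosc n a g x t‖ ≤ N x := fun x t ht =>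
    le_ciSup (hbdd x) ⟨t, abs_lt.1 ht⟩
  have hN0 : ∀ x, 0 ≤ N x := fun x => (norm_nonneg _).trans (hleN x 0 (by simp))
  have hNm : Measurable N := by
    refine (lowerSemicontinuous_ciSup (fun x => hbdd x) fun t => ?_).measurable
    simp only [Sosc_eq]
    have := (continuous_propagate ha i1).comp
      (by fun_prop : Continuous fun x : EuclideanSpace ℝ (Fin n) => (x, (2 * π) ^ a * (t : ℝ)))
    exact this.norm.lowerSemicontinuous
  have hpi : 1 ≤ 2 * π := by linarith [pi_gt_three]
  have hNi : Integrable fun x => N x ^ 2 := by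
    obtain ⟨Φ, hΦ, hle⟩ := exists_majorant ha i1 i2 i3.1 i3.2 ((2 * π) ^ a)
    refine ⟨(hNm.pow_const 2).aestronglyMeasurable, lt_of_le_of_lt (lintegral_mono fun x => ?_) hΦ⟩
    have : ‖N x‖ₑ ^ 2 ≤ Φ x := by
      by_cases hT : Φ x = ⊤
      · simp [hT]
      have hr : ∀ t : Set.Ioo (-1 : ℝ) 1, ‖Sosc n a g x t‖ ≤ √(Φ x).toReal := fun t => by
        have := hle x ((2 * π) ^ a * t) (by
          rw [abs_mul, abs_of_pos (by positivity)]
          have := abs_lt.2 t.2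
          have : 0 < (2 * π) ^ a := by positivity
          nlinarith)
        rw [← Sosc_eq, ← ENNReal.toReal_le_toReal (by simp) hT] at this
        refine Real.le_sqrt_of_sq_le ?_
        simpa using this
      have : Nonempty (Set.Ioo (-1 : ℝ) 1) := ⟨⟨0, by norm_num⟩⟩
      have h2 := ciSup_le hr
      rw [← ENNReal.toReal_le_toReal (by simp) hT]
      have h3 := pow_le_pow_left₀ (hN0 x) h2 2
      rw [Real.sq_sqrt ENNReal.toReal_nonneg] at h3
      simpa using h3
    simpa [enorm_pow] using this
  have hmain : ∫ x, N x ^ 2 ≤ C ^ 2 * ∫ ξ, (1 + ‖ξ‖ ^ 2) ^ s * ‖FT n g ξ‖ ^ 2 := by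
    have := h g hgt
    have hI1 : 0 ≤ ∫ x, N x ^ 2 := integral_nonneg fun x => sq_nonneg _
    have hI2 : 0 ≤ ∫ ξ, (1 + ‖ξ‖ ^ 2) ^ s * ‖FT n g ξ‖ ^ 2 :=
      integral_nonneg fun ξ => by positivity
    rw [← Real.sqrt_eq_rpow, ← Real.sqrt_eq_rpow] at this
    have h2 := pow_le_pow_left₀ (Real.sqrt_nonneg _) this 2
    rwa [mul_pow, Real.sq_sqrt hI1, Real.sq_sqrt hI2] at h2
  have hR : ∫⁻ x, ENNReal.ofReal (N x) ^ 2 ≤ ENNReal.ofReal (C ^ 2) *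
      ∫⁻ ξ, ENNReal.ofReal ((1 + ‖ξ‖ ^ 2) ^ s) * ‖FT n g ξ‖ₑ ^ 2 := by
    have e1 : ∫⁻ x, ENNReal.ofReal (N x) ^ 2 = ENNReal.ofReal (∫ x, N x ^ 2) := by
      rw [ofReal_integral_eq_lintegral_ofReal hNi (ae_of_all _ fun x => sq_nonneg _)]
      simp_rw [ENNReal.ofReal_pow (hN0 _)]
    have e2 : ENNReal.ofReal (∫ ξ, (1 + ‖ξ‖ ^ 2) ^ s * ‖FT n g ξ‖ ^ 2)
        ≤ ∫⁻ ξ, ENNReal.ofReal ((1 + ‖ξ‖ ^ 2) ^ s) * ‖FT n g ξ‖ₑ ^ 2 := by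
      have hI2 : 0 ≤ ∫ ξ, (1 + ‖ξ‖ ^ 2) ^ s * ‖FT n g ξ‖ ^ 2 :=
        integral_nonneg fun ξ => by positivity
      rw [← Real.enorm_of_nonneg hI2]
      refine (enorm_integral_le_lintegral_enorm _).trans (lintegral_mono fun ξ => ?_)
      rw [enorm_mul, enorm_pow, enorm_norm, Real.enorm_of_nonneg (by positivity)]
    rw [e1]
    refine (ENNReal.ofReal_le_ofReal hmain).trans ?_
    rw [ENNReal.ofReal_mul (by positivity)]
    gcongr
  refine ⟨fun x => ENNReal.ofReal (N (l⁻¹ • x)), ?_, fun x τ hτ => ?_, ?_⟩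
  · exact (hNm.comp (measurable_const_smul l⁻¹)).ennreal_ofReal
  · have hp : 0 < (2 * π) ^ a := by positivity
    have hla : 0 < l ^ a := by positivity
    have := hleN (l⁻¹ • x) (((2 * π) ^ a)⁻¹ * ((l ^ a)⁻¹ * τ)) (by
      have h1 : 1 ≤ (2 * π) ^ a := Real.one_le_rpow hpi ha.le
      rw [abs_mul, abs_mul, abs_of_pos (by positivity), abs_of_pos (by positivity)]
      have h2 : (l ^ a)⁻¹ * |τ| < 1 := by rwa [inv_mul_lt_iff₀ hla, mul_one]
      have h3 : ((2 * π) ^ a)⁻¹ ≤ 1 := inv_le_one_of_one_le₀ h1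
      have h4 : 0 ≤ (l ^ a)⁻¹ * |τ| := by positivity
      nlinarith)
    rw [Sosc_eq, mul_inv_cancel_left₀ hp.ne', hg, propagate_dilate f hl0, smul_inv_smul₀ hl0.ne',
      mul_inv_cancel_left₀ hla.ne'] at this
    rw [← ofReal_norm]
    exact ENNReal.ofReal_le_ofReal this
  · rw [lintegral_dilate (fun x => ENNReal.ofReal (N x) ^ 2) (inv_pos.2 hl0)]
    have e : ∫⁻ ξ, ENNReal.ofReal ((1 + ‖ξ‖ ^ 2) ^ s) * ‖FT n g ξ‖ₑ ^ 2
        = ENNReal.ofReal ((2 * π) ^ n * (l ^ n)⁻¹) *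
          ∫⁻ η, ENNReal.ofReal ((1 + l ^ 2 * (2 * π * ‖η‖) ^ 2) ^ s) * ‖𝓕 f η‖ₑ ^ 2 := by
      have := lintegral_dilate (fun η : EuclideanSpace ℝ (Fin n) =>
        ENNReal.ofReal ((1 + l ^ 2 * (2 * π * ‖η‖) ^ 2) ^ s) * ‖𝓕 f η‖ₑ ^ 2)
        (by positivity : 0 < (2 * π * l)⁻¹)
      rw [inv_pow, inv_inv, finrank_euclideanSpace_fin] at this
      have e3 : ENNReal.ofReal ((2 * π) ^ n * (l ^ n)⁻¹)
          = ENNReal.ofReal (((l ^ n)⁻¹) ^ 2) * ENNReal.ofReal ((2 * π * l) ^ n) := by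
        rw [← ENNReal.ofReal_mul (by positivity)]
        congr 1
        rw [mul_pow (2 * π) l]
        have : l ^ n ≠ 0 := by positivity
        field_simp
      rw [e3, mul_assoc, ← this, ← lintegral_const_mul' _ _ ENNReal.ofReal_ne_top]
      refine lintegral_congr fun ξ => ?_
      rw [FT_eq, hg, fourier_dilate f hl0, norm_smul, Real.norm_of_nonneg (by positivity),
        smul_smul, finrank_euclideanSpace_fin]
      have e4 : l ^ 2 * (2 * π * ((2 * π * l)⁻¹ * ‖ξ‖)) ^ 2 = ‖ξ‖ ^ 2 := by field_simp
      have e5 : l⁻¹ * (2 * π)⁻¹ = (2 * π * l)⁻¹ := by field_simp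
      rw [e4, e5, enorm_mul, mul_pow, ← ofReal_norm (((l ^ n)⁻¹ : ℝ) : ℂ), Complex.norm_real,
        Real.norm_of_nonneg (by positivity), ENNReal.ofReal_pow (by positivity)]
      ring
    have e6 : ∫⁻ η, ENNReal.ofReal ((1 + l ^ 2 * (2 * π * ‖η‖) ^ 2) ^ s) * ‖𝓕 f η‖ₑ ^ 2
        ≤ ENNReal.ofReal (l ^ (2 * σ)) *
          ∫⁻ η, ‖(((1 + (2 * π * ‖η‖) ^ 2) ^ k : ℝ) : ℂ) * 𝓕 f η‖ₑ ^ 2 := by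
      rw [← lintegral_const_mul' _ _ ENNReal.ofReal_ne_top]
      refine lintegral_mono fun η => ?_
      rw [enorm_mul, mul_pow (‖_‖ₑ), ← mul_assoc]
      refine mul_le_mul' ?_ le_rfl
      rw [← ofReal_norm, Complex.norm_real, Real.norm_of_nonneg (by positivity),
        ← ENNReal.ofReal_pow (by positivity), ← ENNReal.ofReal_mul (by positivity)]
      exact ENNReal.ofReal_le_ofReal (sobolev_weight_le hs h0 hk hl (by positivity))
    rw [e] at hR
    rw [inv_pow, inv_inv, finrank_euclideanSpace_fin]
    calc _ ≤ ENNReal.ofReal (l ^ n) * (ENNReal.ofReal (C ^ 2) *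
          (ENNReal.ofReal ((2 * π) ^ n * (l ^ n)⁻¹) * (ENNReal.ofReal (l ^ (2 * σ)) *
          ∫⁻ η, ‖(((1 + (2 * π * ‖η‖) ^ 2) ^ k : ℝ) : ℂ) * 𝓕 f η‖ₑ ^ 2))) := by
          gcongr
          exact hR.trans (by gcongr)
      _ = _ := by
          simp only [← mul_assoc]
          rw [← ENNReal.ofReal_mul (by positivity), ← ENNReal.ofReal_mul (by positivity),
            ← ENNReal.ofReal_mul (by positivity)]
          congr 2
          field_simp

theorem sq_lintegral_le {α : Type*} [MeasurableSpace α] (ν : Measure α) {g : α → ℝ≥0∞}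
    (hg : AEMeasurable g ν) : (∫⁻ x, g x ∂ν) ^ 2 ≤ ν Set.univ * ∫⁻ x, g x ^ 2 ∂ν := by
  have := ENNReal.lintegral_mul_le_Lp_mul_Lq ν
    Real.HolderConjugate.two_two (aemeasurable_const (b := (1 : ℝ≥0∞))) hg
  simp only [Pi.mul_apply, one_mul, ENNReal.one_rpow, lintegral_const] at this
  calc _ ≤ _ := pow_le_pow_left' this 2
    _ = _ := by
      have e : (1 / 2 : ℝ) * ((2 : ℕ) : ℝ) = 1 := by norm_num
      rw [mul_pow, ← ENNReal.rpow_mul_natCast, ← ENNReal.rpow_mul_natCast, e,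
        ENNReal.rpow_one, ENNReal.rpow_one]
      simp_rw [ENNReal.rpow_ofNat]

/-- Young's inequality for convolutions of `L¹` with `L²`. -/
theorem lintegral_conv_sq_le {k M : E → ℝ≥0∞} (hk : Measurable k) (hM : Measurable M) :
    ∫⁻ x, (∫⁻ z, k z * M (x - z)) ^ 2 ≤ (∫⁻ z, k z) ^ 2 * ∫⁻ x, M x ^ 2 := by
  have hm : Measurable fun p : E × E => M (p.1 - p.2) := hM.comp (by fun_prop)
  have hm' : Measurable fun p : E × E => k p.2 * M (p.1 - p.2) ^ 2 :=
    (hk.comp measurable_snd).mul (hm.pow_const 2)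
  have h1 : ∀ x, (∫⁻ z, k z * M (x - z)) ^ 2 ≤ (∫⁻ z, k z) * ∫⁻ z, k z * M (x - z) ^ 2 := by
    intro x
    have hx : Measurable fun z => M (x - z) := hM.comp (by fun_prop)
    have := sq_lintegral_le (volume.withDensity k) hx.aemeasurable
    rw [lintegral_withDensity_eq_lintegral_mul _ hk hx,
      lintegral_withDensity_eq_lintegral_mul _ hk (hx.pow_const 2),
      withDensity_apply _ MeasurableSet.univ, Measure.restrict_univ] at this
    exact this
  calc _ ≤ ∫⁻ x, (∫⁻ z, k z) * ∫⁻ z, k z * M (x - z) ^ 2 := lintegral_mono h1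
    _ = (∫⁻ z, k z) * ∫⁻ z, ∫⁻ x, k z * M (x - z) ^ 2 := by
      rw [lintegral_const_mul _ hm'.lintegral_prod_right', lintegral_lintegral_swap hm'.aemeasurable]
    _ = (∫⁻ z, k z) * ∫⁻ z, k z * ∫⁻ x, M x ^ 2 := by
      congr 1
      refine lintegral_congr fun z => ?_
      have hz : Measurable fun x => M (x - z) := hM.comp (by fun_prop)
      rw [lintegral_const_mul _ (hz.pow_const 2),
        lintegral_sub_right_eq_self fun x => M x ^ 2]
    _ = _ := by rw [lintegral_mul_const _ hk, sq, mul_assoc]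

/-- Integration of radial functions in polar coordinates. -/
theorem lintegral_fun_norm [Nontrivial E] {f : ℝ → ℝ≥0∞} (hf : Measurable f) :
    ∫⁻ x : E, f ‖x‖ = (volume : Measure E).toSphere Set.univ *
      ∫⁻ y in Set.Ioi (0 : ℝ), ENNReal.ofReal (y ^ (Module.finrank ℝ E - 1)) * f y := by
  have h0 : MeasurableSet ({0}ᶜ : Set E) := (measurableSet_singleton _).compl
  have hv : Measurable fun y : Set.Ioi (0 : ℝ) => f y := hf.comp measurable_subtype_coe
  calc ∫⁻ x : E, f ‖x‖ = ∫⁻ x in ({0}ᶜ : Set E), f ‖x‖ := by rw [restrict_compl_singleton]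
    _ = ∫⁻ x : ({0}ᶜ : Set E), f ‖x.1‖ ∂((volume : Measure E).comap (↑)) :=
        (lintegral_subtype_comap h0 fun x => f ‖x‖).symm
    _ = ∫⁻ p, f p.2 ∂((volume : Measure E).toSphere.prod
          (Measure.volumeIoiPow (Module.finrank ℝ E - 1))) := by
        have := (volume : Measure E).measurePreserving_homeomorphUnitSphereProd.lintegral_comp
          (f := fun p => f p.2) (hv.comp measurable_snd)
        simpa using this
    _ = _ := by
        have hm : Measurable fun p : Metric.sphere (0 : E) 1 × Set.Ioi (0 : ℝ) => f p.2 :=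
          hv.comp measurable_snd
        rw [lintegral_prod _ hm.aemeasurable]
        simp only
        rw [lintegral_const, mul_comm]
        congr 1
        rw [Measure.volumeIoiPow, lintegral_withDensity_eq_lintegral_mul _ (by fun_prop) hv,
          ← lintegral_subtype_comap measurableSet_Ioi]
        rfl

theorem fourierInv_mul_fourier {q F : E → ℂ} (hq : Integrable q) (hF : Integrable F) (x : E) :
    𝓕⁻ (fun η => 𝓕 q η * F η) x = ∫ z, q z * 𝓕⁻ F (x - z) := by
  rw [Real.fourierInv_eq']
  simp_rw [Real.fourierInv_eq' F, Real.fourier_eq' q, smul_eq_mul, ← integral_mul_const,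
    ← integral_const_mul]
  rw [integral_integral_swap]
  · refine integral_congr_ae (ae_of_all _ fun z => integral_congr_ae (ae_of_all _ fun η => ?_))
    simp only
    rw [show ((2 * π * ⟪η, x - z⟫_ℝ : ℝ) : ℂ) * Complex.I = ((2 * π * ⟪η, x⟫_ℝ : ℝ) : ℂ) * Complex.I
      + ((-2 * π * ⟪z, η⟫_ℝ : ℝ) : ℂ) * Complex.I by
        rw [inner_sub_right, real_inner_comm η z]; push_cast; ring, Complex.exp_add]
    ring
  · have h1 : Integrable (fun p : E × E => F p.1 * q p.2) (volume.prod volume) := hF.mul_prod hq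
    have h2 : Continuous fun p : E × E => Complex.exp (((2 * π * ⟪p.1, x⟫_ℝ : ℝ) : ℂ) * Complex.I)
      * Complex.exp (((-2 * π * ⟪p.2, p.1⟫_ℝ : ℝ) : ℂ) * Complex.I) := by fun_prop
    refine (h1.bdd_mul (c := 1) h2.aestronglyMeasurable (ae_of_all _ fun p => ?_)).congr
      (ae_of_all _ fun p => ?_)
    · rw [norm_mul, Complex.norm_exp_ofReal_mul_I, Complex.norm_exp_ofReal_mul_I, one_mul]
    · simp only [Function.uncurry]
      ring

/-- A frequency cutoff is bounded pointwise by convolution with a maximal function. -/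
theorem enorm_propagate_cutoff_le {a : ℝ} (ha : 0 < a) {q F : E → ℂ} (hq : Integrable q)
    (hF : Integrable F) {M : E → ℝ≥0∞} {τ : ℝ} (hM : ∀ x, ‖propagate a F x τ‖ₑ ≤ M x) (x : E) :
    ‖propagate a (fun η => 𝓕 q η * F η) x τ‖ₑ ≤ ∫⁻ z, ‖q z‖ₑ * M (x - z) := by
  have e : propagate a (fun η => 𝓕 q η * F η) x τ = ∫ z, q z * propagate a F (x - z) τ := by
    unfold propagate
    rw [← fourierInv_mul_fourier hq (integrable_wave_mul ha hF τ)]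
    simp_rw [mul_left_comm]
  rw [e]
  refine (enorm_integral_le_lintegral_enorm _).trans (lintegral_mono fun z => ?_)
  rw [enorm_mul]
  gcongr
  exact hM _

theorem exists_isometry_of_norm_eq {x y : E} (h : ‖x‖ = ‖y‖) : ∃ L : E ≃ₗᵢ[ℝ] E, L x = y :=
  ⟨_, Submodule.reflection_sub h⟩

theorem fourier_radial {f : E → ℂ} (hf : ∀ x y, ‖x‖ = ‖y‖ → f x = f y) {x y : E}
    (h : ‖x‖ = ‖y‖) : 𝓕 f x = 𝓕 f y := by
  obtain ⟨L, rfl⟩ := exists_isometry_of_norm_eq h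
  have : f ∘ L = f := funext fun z => hf _ _ (by simp)
  rw [← Real.fourier_comp_linearIsometry, this]

theorem propagate_radial {a : ℝ} {F : E → ℂ} (hF : ∀ x y, ‖x‖ = ‖y‖ → F x = F y) {x y : E}
    (h : ‖x‖ = ‖y‖) (τ : ℝ) : propagate a F x τ = propagate a F y τ := by
  unfold propagate
  rw [Real.fourierInv_eq_fourier_neg, Real.fourierInv_eq_fourier_neg]
  refine fourier_radial (fun u v huv => ?_) (by simpa using h)
  simp only [wave, huv, hF u v huv]

/-- The values of a radial solution along a space-time line, bounded by a maximal function. -/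
theorem lintegral_ray_le [Nontrivial E] {a : ℝ} (ha : 0 < a) {q F : E → ℂ} (hq : Integrable q)
    (hqc : Continuous q) (hF : Integrable F) (hFr : ∀ x y, ‖x‖ = ‖y‖ → F x = F y)
    (hqr : ∀ x y, ‖x‖ = ‖y‖ → q x = q y) {M : E → ℝ≥0∞} (hMm : Measurable M) {T : ℝ}
    (hM : ∀ x τ, |τ| < T → ‖propagate a F x τ‖ₑ ≤ M x) {R D b : ℝ} (hR : 0 ≤ R) (hb : 0 < b)
    (hD : b * D ≤ T) {e : E} (he : ‖e‖ = 1) :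
    (volume : Measure E).toSphere Set.univ * (ENNReal.ofReal (R ^ (Module.finrank ℝ E - 1)) *
      ∫⁻ y in Set.Ioo 0 D, ‖propagate a (fun η => 𝓕 q η * F η) ((R + y) • e) (-(b * y))‖ₑ ^ 2)
      ≤ (∫⁻ z, ‖q z‖ₑ) ^ 2 * ∫⁻ x, M x ^ 2 := by
  set G : E → ℂ := fun η => 𝓕 q η * F η with hG
  have hqF : Continuous (𝓕 q) := VectorFourier.fourierIntegral_continuous
    Real.continuous_fourierChar (by exact continuous_inner) hq
  have hGi : Integrable G := hF.bdd_mul (c := ∫ x, ‖q x‖) hqF.aestronglyMeasurable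
    (ae_of_all _ fun η => VectorFourier.norm_fourierIntegral_le_integral_norm _ _ _ _ _)
  have hGr : ∀ x y, ‖x‖ = ‖y‖ → G x = G y := fun x y h => by
    simp only [hG, fourier_radial hqr h, hFr x y h]
  have hpc := continuous_propagate (E := E) ha hGi
  set u : ℝ → ℝ≥0∞ := fun r => ‖propagate a G (r • e) (-(b * (r - R)))‖ₑ ^ 2 with hu
  have hum : Measurable u := by
    have := hpc.comp (by fun_prop : Continuous fun r : ℝ => (r • e, -(b * (r - R))))
    exact this.measurable.enorm.pow_const 2
  set H : ℝ → ℝ≥0∞ := (Set.Ioo R (R + D)).indicator u with hH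
  have hHm : Measurable H := hum.indicator measurableSet_Ioo
  have h1 : ∫⁻ x : E, H ‖x‖ ≤ (∫⁻ z, ‖q z‖ₑ) ^ 2 * ∫⁻ x, M x ^ 2 := by
    refine le_trans (lintegral_mono fun x => ?_) (lintegral_conv_sq_le hqc.measurable.enorm hMm)
    by_cases hx : ‖x‖ ∈ Set.Ioo R (R + D)
    swap
    · simp [hH, hx]
    simp only [hH, Set.indicator_of_mem hx, hu]
    rw [propagate_radial hGr (x := ‖x‖ • e) (y := x) (by simp [norm_smul, he])]
    refine pow_le_pow_left' (enorm_propagate_cutoff_le ha hq hF (fun z => hM z _ ?_) x) 2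
    rw [abs_neg, abs_of_pos (mul_pos hb (sub_pos.2 hx.1))]
    have := hx.2
    nlinarith
  refine le_trans ?_ h1
  rw [lintegral_fun_norm hHm]
  refine mul_le_mul' le_rfl ?_
  calc _ = ENNReal.ofReal (R ^ (Module.finrank ℝ E - 1)) * ∫⁻ y, H y := by
        congr 1
        rw [← lintegral_add_left_eq_self H R, ← lintegral_indicator measurableSet_Ioo]
        refine lintegral_congr fun y => ?_
        simp [hH, hu, Set.indicator]
    _ = ∫⁻ y, ENNReal.ofReal (R ^ (Module.finrank ℝ E - 1)) * H y :=
        (lintegral_const_mul _ hHm).symm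
    _ = ∫⁻ y in Set.Ioi 0, ENNReal.ofReal (R ^ (Module.finrank ℝ E - 1)) * H y := by
        rw [← lintegral_indicator measurableSet_Ioi]
        refine lintegral_congr fun y => ?_
        by_cases hy : 0 < y
        · simp [hy]
        · have : y ∉ Set.Ioo R (R + D) := fun h => hy (hR.trans_lt h.1)
          simp [hy, hH, this]
    _ ≤ _ := by
        refine lintegral_mono fun y => ?_
        by_cases hy : y ∈ Set.Ioo R (R + D)
        · gcongr
          exact hy.1.le
        · simp [hH, hy]

/-- A bump function on the line, equal to `1` on `[7/16, 25/16]` and vanishing off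
`[1/4, 7/4]`. -/
def annulusBump : ContDiffBump (1 : ℝ) := ⟨9 / 16, 3 / 4, by norm_num, by norm_num⟩

/-- A smooth radial cutoff to an annulus around the unit sphere. -/
def cutoff (η : E) : ℂ := (annulusBump (‖η‖ ^ 2) : ℂ)

theorem norm_cutoff_le (η : E) : ‖cutoff η‖ ≤ 1 := by
  rw [cutoff, Complex.norm_real, Real.norm_of_nonneg (annulusBump.nonneg)]
  exact annulusBump.le_one

theorem cutoff_eq_one {η : E} (h1 : 3 / 4 ≤ ‖η‖) (h2 : ‖η‖ ≤ 5 / 4) : cutoff η = 1 := by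
  rw [cutoff, annulusBump.one_of_mem_closedBall, Complex.ofReal_one]
  rw [Metric.mem_closedBall, Real.dist_eq, abs_le]
  constructor <;> simp only [annulusBump] <;> nlinarith

theorem cutoff_eq_zero_of_lt {η : E} (h : ‖η‖ < 1 / 2) : cutoff η = 0 := by
  rw [cutoff, annulusBump.zero_of_le_dist, Complex.ofReal_zero]
  rw [Real.dist_eq]
  refine le_trans ?_ (neg_le_abs _)
  simp only [annulusBump]
  nlinarith [norm_nonneg η]

theorem cutoff_eq_zero_of_gt {η : E} (h : 2 < ‖η‖) : cutoff η = 0 := by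
  rw [cutoff, annulusBump.zero_of_le_dist, Complex.ofReal_zero]
  rw [Real.dist_eq]
  refine le_trans ?_ (le_abs_self _)
  simp only [annulusBump]
  nlinarith [norm_nonneg η]

theorem contDiff_cutoff : ContDiff ℝ ∞ (cutoff : E → ℂ) := by
  unfold cutoff
  have h1 : ContDiff ℝ ∞ fun η : E => annulusBump (‖η‖ ^ 2) :=
    annulusBump.contDiff.comp (contDiff_norm_sq ℝ)
  exact Complex.ofRealCLM.contDiff.comp h1

theorem contDiff_wave_mul_cutoff (a τ : ℝ) : ContDiff ℝ ∞ fun η : E => wave a τ η * cutoff η := by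
  rw [contDiff_iff_contDiffAt]
  intro η
  by_cases h : η = 0
  · have : (fun η : E => wave a τ η * cutoff η) =ᶠ[𝓝 η] fun _ => 0 := by
      subst h
      filter_upwards [Metric.ball_mem_nhds (0 : E) (by norm_num : (0 : ℝ) < 1 / 2)] with ξ hξ
      rw [cutoff_eq_zero_of_lt (by simpa using hξ), mul_zero]
    exact contDiffAt_const.congr_of_eventuallyEq this
  · refine ContDiffAt.mul ?_ contDiff_cutoff.contDiffAt
    unfold wave
    have h1 : ContDiffAt ℝ ∞ (fun η : E => ‖η‖ ^ a) η :=
      (contDiffAt_norm ℝ h).rpow_const_of_ne (by simpa using h)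
    have h2 : ContDiffAt ℝ ∞ (fun η : E => ((τ * ‖η‖ ^ a : ℝ) : ℂ)) η :=
      Complex.ofRealCLM.contDiff.contDiffAt.comp η (contDiffAt_const.mul h1)
    exact (h2.mul contDiffAt_const).cexp

theorem hasCompactSupport_cutoff : HasCompactSupport (cutoff : E → ℂ) := by
  refine HasCompactSupport.intro (isCompact_closedBall (0 : E) 2) fun η hη => ?_
  exact cutoff_eq_zero_of_gt (by simpa using hη)

theorem exists_kernel (a τ : ℝ) :
    ∃ Q : 𝓢(E, ℂ), ∀ η, 𝓕 (Q : E → ℂ) η = wave a τ η * cutoff η := by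
  have hc : HasCompactSupport fun η : E => wave a τ η * cutoff η :=
    hasCompactSupport_cutoff.mul_left
  refine ⟨𝓕⁻ (hc.toSchwartzMap (contDiff_wave_mul_cutoff a τ)), fun η => ?_⟩
  rw [← SchwartzMap.fourier_coe, FourierTransform.fourier_fourierInv_eq]
  simp

theorem exists_cutoff_kernel : ∃ q : 𝓢(E, ℂ), 𝓕 (q : E → ℂ) = cutoff := by
  obtain ⟨q, hq⟩ := exists_kernel (E := E) 1 0
  exact ⟨q, funext fun η => by simp [hq, wave]⟩

theorem radial_of_fourier_eq_cutoff {q : 𝓢(E, ℂ)} (hq : 𝓕 (q : E → ℂ) = cutoff) {x y : E}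
    (h : ‖x‖ = ‖y‖) : q x = q y := by
  have e : (q : E → ℂ) = 𝓕⁻ (cutoff : E → ℂ) := by
    rw [← hq, ← SchwartzMap.fourier_coe, ← SchwartzMap.fourierInv_coe,
      FourierTransform.fourierInv_fourier_eq]
  rw [e, Real.fourierInv_eq_fourier_neg, Real.fourierInv_eq_fourier_neg]
  refine fourier_radial (fun u v huv => ?_) (by simpa using h)
  simp only [cutoff, huv]

theorem propagate_cutoff_eq {a τ : ℝ} {f : E → ℂ} (f' : 𝓢(E, ℂ)) (hf : f = f') {Q : 𝓢(E, ℂ)}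
    (hQ : ∀ η, 𝓕 (Q : E → ℂ) η = wave a τ η * cutoff η) (x : E) :
    propagate a (fun η => cutoff η * 𝓕 f η) x τ = ∫ z, Q z * f (x - z) := by
  have e : f = 𝓕⁻ (𝓕 f) := by
    rw [hf, ← SchwartzMap.fourier_coe, ← SchwartzMap.fourierInv_coe,
      FourierTransform.fourierInv_fourier_eq]
  have hi : Integrable (𝓕 f) := by
    rw [hf, ← SchwartzMap.fourier_coe]
    exact (𝓕 f').integrable
  conv_rhs => rw [e]
  rw [← fourierInv_mul_fourier Q.integrable hi]
  simp_rw [hQ, propagate, mul_assoc]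

/-- Second order Taylor bound for the phase, with the cutoff taking care of large arguments. -/
theorem exists_phase_bound (a : ℝ) {e : E} (he : ‖e‖ = 1) :
    ∃ K > 0, ∀ τ x : ℝ, ‖Complex.exp (((τ * (|1 + x| ^ a - 1 - a * x) : ℝ) : ℂ) * Complex.I)
      * cutoff ((1 + x) • e) - 1‖ ≤ K * (|τ| + 1) * x ^ 2 := by
  set φ : ℝ → ℝ := fun x => (1 + x) ^ a - 1 - a * x with hφ
  set φ' : ℝ → ℝ := fun x => a * (1 + x) ^ (a - 1) - a with hφ'
  have hd : ∀ x, |x| < 1 → HasDerivAt φ (φ' x) x := fun x hx => by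
    have h1 : HasDerivAt (fun x : ℝ => 1 + x) 1 x := (hasDerivAt_id x).const_add 1
    have h2 := h1.rpow_const (p := a) (Or.inl (by rw [abs_lt] at hx; linarith))
    refine ((h2.sub_const 1).sub ((hasDerivAt_id x).const_mul a)).congr_deriv ?_
    simp [hφ']
  have hd' : DifferentiableAt ℝ φ' 0 := by
    have h1 : HasDerivAt (fun x : ℝ => 1 + x) 1 0 := (hasDerivAt_id 0).const_add 1
    have h2 := h1.rpow_const (p := a - 1) (Or.inl (by norm_num))
    exact ((h2.const_mul a).sub_const a).differentiableAt
  obtain ⟨L, hL⟩ := hd'.isBigO_sub.bound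
  obtain ⟨ρ, hρ, hρL⟩ := Metric.eventually_nhds_iff_ball.1 hL
  set r := min (ρ / 2) (1 / 4) with hr
  have hr0 : 0 < r := lt_min (by linarith) (by norm_num)
  have hrr : r ≤ 1 / 4 := min_le_right _ _
  have hrρ : r ≤ ρ / 2 := min_le_left _ _
  have hL' : ∀ x, |x| ≤ r → |φ' x| ≤ |L| * |x| := fun x hx => by
    have := hρL x (by simp; linarith)
    simp only [hφ', add_zero, Real.one_rpow, mul_one, sub_self, sub_zero,
      Real.norm_eq_abs] at this
    exact this.trans (mul_le_mul_of_nonneg_right (le_abs_self L) (abs_nonneg x))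
  have hφb : ∀ x, |x| ≤ r → |φ x| ≤ |L| * x ^ 2 := fun x hx => by
    have := Convex.norm_image_sub_le_of_norm_hasDerivWithin_le (f := φ) (f' := φ')
      (s := Metric.closedBall 0 |x|) (x := 0) (y := x) (C := |L| * |x|)
      (fun z hz => (hd z (by simp at hz; linarith)).hasDerivWithinAt)
      (fun z hz => by
        simp at hz
        exact (hL' z (hz.trans hx)).trans (mul_le_mul_of_nonneg_left hz (abs_nonneg L)))
      (convex_closedBall _ _) (by simp) (by simp)
    simp only [hφ, add_zero, Real.one_rpow, mul_zero, sub_self, sub_zero, Real.norm_eq_abs]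
      at this
    rwa [mul_assoc, abs_mul_abs_self, ← sq] at this
  refine ⟨|L| + 2 / r ^ 2, by positivity, fun τ x => ?_⟩
  rcases le_total |x| r with hx | hx
  · have hx' := abs_le.1 hx
    have h1 : |1 + x| = 1 + x := abs_of_pos (by linarith)
    rw [cutoff_eq_one, mul_one, h1, mul_comm]
    · refine Real.norm_exp_I_mul_ofReal_sub_one_le.trans ?_
      rw [norm_mul, Real.norm_eq_abs, Real.norm_eq_abs]
      calc _ ≤ |τ| * (|L| * x ^ 2) := mul_le_mul_of_nonneg_left (hφb x hx) (abs_nonneg τ)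
        _ ≤ _ := by
          have h3 : 0 ≤ |L| * x ^ 2 := by positivity
          have h4 : 0 ≤ 2 / r ^ 2 * (|τ| + 1) * x ^ 2 := by positivity
          nlinarith
    · rw [norm_smul, he, mul_one, Real.norm_eq_abs, h1]; linarith
    · rw [norm_smul, he, mul_one, Real.norm_eq_abs, h1]; linarith
  · calc _ ≤ (2 : ℝ) := by
          refine (norm_sub_le _ _).trans ?_
          rw [norm_mul, Complex.norm_exp_ofReal_mul_I, norm_one, one_mul]
          linarith [norm_cutoff_le ((1 + x) • e)]
      _ = 2 / r ^ 2 * r ^ 2 := by field_simp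
      _ ≤ 2 / r ^ 2 * x ^ 2 := by
          rw [← sq_abs x]
          gcongr
      _ ≤ _ := by
          have h3 : 0 ≤ |L| * (|τ| + 1) * x ^ 2 := by positivity
          have h4 : 0 ≤ 2 / r ^ 2 * |τ| * x ^ 2 := by positivity
          nlinarith

/-- A bump function on the line supported in `[-1, 1]`. -/
def lineBump : ContDiffBump (0 : ℝ) := ⟨1 / 2, 1, by norm_num, by norm_num⟩

/-- A wave packet of width `A` and unit frequency on the line. -/
def profile (A v : ℝ) : ℂ := Complex.exp ((2 * π * v : ℝ) * Complex.I) * (lineBump (v / A) : ℂ)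

/-- A radial wave packet concentrated near the sphere of radius `R`. -/
def packet (A R : ℝ) (x : E) : ℂ := profile A ((‖x‖ ^ 2 - R ^ 2) / (2 * R))

theorem contDiff_profile (A : ℝ) : ContDiff ℝ ∞ (profile A) := by
  unfold profile
  have h1 : ContDiff ℝ ∞ fun v : ℝ => (lineBump (v / A) : ℂ) :=
    Complex.ofRealCLM.contDiff.comp (lineBump.contDiff.comp (contDiff_id.div_const A))
  have h2 : ContDiff ℝ ∞ fun v : ℝ => ((2 * π * v : ℝ) : ℂ) :=
    Complex.ofRealCLM.contDiff.comp (contDiff_const.mul contDiff_id)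
  exact ((h2.mul contDiff_const).cexp).mul h1

theorem norm_profile_le (A v : ℝ) : ‖profile A v‖ ≤ 1 := by
  rw [profile, norm_mul, Complex.norm_exp_ofReal_mul_I, one_mul, Complex.norm_real,
    Real.norm_of_nonneg lineBump.nonneg]
  exact lineBump.le_one

theorem profile_eq_zero {A v : ℝ} (hA : 0 < A) (h : A ≤ |v|) : profile A v = 0 := by
  rw [profile, lineBump.zero_of_le_dist, Complex.ofReal_zero, mul_zero]
  rw [Real.dist_eq, sub_zero, abs_div, abs_of_pos hA]
  exact (le_div_iff₀ hA).2 (by simpa [lineBump] using h)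

theorem exists_lineBump_fourier : ∃ p : 𝓢(ℝ, ℂ), ∫ μ, p μ = 1 ∧
    ∀ A v, profile A v = ∫ μ, Complex.exp ((2 * π * (v * (1 + μ / A)) : ℝ) * Complex.I) * p μ := by
  have hs : HasCompactSupport fun v : ℝ => (lineBump v : ℂ) :=
    lineBump.hasCompactSupport.comp_left Complex.ofReal_zero
  have hc : ContDiff ℝ ∞ fun v : ℝ => (lineBump v : ℂ) :=
    Complex.ofRealCLM.contDiff.comp lineBump.contDiff
  set ψ : 𝓢(ℝ, ℂ) := hs.toSchwartzMap hc
  have h : ∀ v, (lineBump v : ℂ) = ∫ μ,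
      Complex.exp ((2 * π * (v * μ) : ℝ) * Complex.I) * 𝓕 ψ μ := by
    intro v
    have e : (lineBump v : ℂ) = 𝓕⁻ (𝓕 ψ) v := by
      rw [FourierTransform.fourierInv_fourier_eq]; simp [ψ]
    rw [e, SchwartzMap.fourierInv_coe, Real.fourierInv_eq']
    simp
  refine ⟨𝓕 ψ, ?_, fun A v => ?_⟩
  · have := h 0
    rw [lineBump.one_of_mem_closedBall (by simp [lineBump])] at this
    simpa using this.symm
  · rw [profile, h, ← integral_const_mul]
    refine integral_congr_ae (ae_of_all _ fun μ => ?_)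
    simp only
    rw [← mul_assoc, ← Complex.exp_add]
    congr 2
    push_cast
    ring

/-- The limiting profile stays close to a unimodular function. -/
theorem exists_limit_bound {a : ℝ} (ha : 0 < a) {e : E} (he : ‖e‖ = 1) :
    ∃ K > 0, ∀ A > 0, ∀ y τ : ℝ, τ = -(2 * π / a * y) → ∀ Q : 𝓢(E, ℂ),
      (∀ η, 𝓕 (Q : E → ℂ) η = wave a τ η * cutoff η) →
      ‖(∫ z, Q z * profile A (y - ⟪e, z⟫_ℝ)) - Complex.exp ((2 * π * y + τ : ℝ) * Complex.I)‖
        ≤ K * (|τ| + 1) / A ^ 2 := by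
  obtain ⟨K, hK, hb⟩ := exists_phase_bound (E := E) a he
  obtain ⟨p, hp1, hp⟩ := exists_lineBump_fourier
  set I := ∫ μ, ‖μ‖ ^ 2 * ‖p μ‖ with hI
  have hI0 : 0 ≤ I := integral_nonneg fun μ => by positivity
  have hIi : Integrable fun μ => ‖μ‖ ^ 2 * ‖p μ‖ := p.integrable_pow_mul volume 2
  refine ⟨K * (I + 1), by positivity, fun A hA y τ hτ Q hQ => ?_⟩
  have hτ' : a * τ = -(2 * π * y) := by rw [hτ]; field_simp
  have e1 : ∫ z, Q z * profile A (y - ⟪e, z⟫_ℝ)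
      = ∫ μ, Complex.exp ((2 * π * (y * (1 + μ / A)) : ℝ) * Complex.I) * p μ *
        (wave a τ ((1 + μ / A) • e) * cutoff ((1 + μ / A) • e)) := by
    simp_rw [hp, ← hQ, Real.fourier_eq' (Q : E → ℂ), ← integral_const_mul]
    rw [integral_integral_swap]
    · refine integral_congr_ae (ae_of_all _ fun μ => integral_congr_ae (ae_of_all _ fun z => ?_))
      simp only [smul_eq_mul]
      rw [show ((2 * π * ((y - ⟪e, z⟫_ℝ) * (1 + μ / A)) : ℝ) : ℂ) * Complex.I
        = ((2 * π * (y * (1 + μ / A)) : ℝ) : ℂ) * Complex.I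
          + ((-2 * π * ⟪z, (1 + μ / A) • e⟫_ℝ : ℝ) : ℂ) * Complex.I by
          rw [real_inner_smul_right, real_inner_comm e z]; push_cast; ring, Complex.exp_add]
      ring
    · have h1 : Integrable (fun q : E × ℝ => Q q.1 * p q.2) (volume.prod volume) :=
        Q.integrable.mul_prod p.integrable
      have h2 : Continuous fun q : E × ℝ =>
        Complex.exp (((2 * π * ((y - ⟪e, q.1⟫_ℝ) * (1 + q.2 / A)) : ℝ) : ℂ) * Complex.I) := by
        fun_prop
      refine (h1.bdd_mul (c := 1) h2.aestronglyMeasurable (ae_of_all _ fun q => ?_)).congr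
        (ae_of_all _ fun q => ?_)
      · rw [Complex.norm_exp_ofReal_mul_I]
      · simp only [Function.uncurry]
        ring
  have hwc : Continuous fun μ : ℝ => wave a τ ((1 + μ / A) • e) * cutoff ((1 + μ / A) • e) :=
    (contDiff_wave_mul_cutoff a τ).continuous.comp (by fun_prop)
  have e2 : Complex.exp ((2 * π * y + τ : ℝ) * Complex.I)
      = ∫ μ, Complex.exp ((2 * π * y + τ : ℝ) * Complex.I) * p μ := by
    rw [integral_const_mul, hp1, mul_one]
  have hi1 : Integrable fun μ : ℝ =>
      Complex.exp ((2 * π * (y * (1 + μ / A)) : ℝ) * Complex.I) * p μ *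
        (wave a τ ((1 + μ / A) • e) * cutoff ((1 + μ / A) • e)) := by
    refine Integrable.mul_bdd (c := 1) ?_ hwc.aestronglyMeasurable (ae_of_all _ fun μ => ?_)
    · refine p.integrable.bdd_mul (c := 1) (by fun_prop : Continuous fun μ : ℝ =>
        Complex.exp ((2 * π * (y * (1 + μ / A)) : ℝ) * Complex.I)).aestronglyMeasurable
        (ae_of_all _ fun μ => ?_)
      rw [Complex.norm_exp_ofReal_mul_I]
    · rw [norm_mul, norm_wave, one_mul]
      exact norm_cutoff_le _
  rw [e1, e2, ← integral_sub hi1 (p.integrable.const_mul _)]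
  calc _ ≤ ∫ μ, K * (|τ| + 1) / A ^ 2 * (‖μ‖ ^ 2 * ‖p μ‖) := by
        refine norm_integral_le_of_norm_le (hIi.const_mul _) (ae_of_all _ fun μ => ?_)
        have e3 : Complex.exp ((2 * π * (y * (1 + μ / A)) : ℝ) * Complex.I) * p μ *
            (wave a τ ((1 + μ / A) • e) * cutoff ((1 + μ / A) • e))
            - Complex.exp ((2 * π * y + τ : ℝ) * Complex.I) * p μ
            = Complex.exp ((2 * π * y + τ : ℝ) * Complex.I) * p μ *
              (Complex.exp (((τ * (|1 + μ / A| ^ a - 1 - a * (μ / A)) : ℝ) : ℂ) * Complex.I)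
                * cutoff ((1 + μ / A) • e) - 1) := by
          have e4 : Complex.exp ((2 * π * (y * (1 + μ / A)) : ℝ) * Complex.I)
              * wave a τ ((1 + μ / A) • e) = Complex.exp ((2 * π * y + τ : ℝ) * Complex.I)
              * Complex.exp (((τ * (|1 + μ / A| ^ a - 1 - a * (μ / A)) : ℝ) : ℂ) * Complex.I) := by
            rw [wave, ← Complex.exp_add, ← Complex.exp_add, norm_smul, he, mul_one,
              Real.norm_eq_abs, ← add_mul, ← add_mul, ← Complex.ofReal_add, ← Complex.ofReal_add]
            congr 3
            linear_combination (μ / A) * hτ'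
          linear_combination p μ * cutoff ((1 + μ / A) • e) * e4
        rw [e3, norm_mul, norm_mul, Complex.norm_exp_ofReal_mul_I, one_mul]
        calc _ ≤ ‖p μ‖ * (K * (|τ| + 1) * (μ / A) ^ 2) :=
              mul_le_mul_of_nonneg_left (hb _ _) (norm_nonneg _)
          _ = _ := by rw [Real.norm_eq_abs, sq_abs]; field_simp
    _ = K * (|τ| + 1) / A ^ 2 * I := integral_const_mul _ _
    _ ≤ _ := by
      have : 0 ≤ K * (|τ| + 1) / A ^ 2 := by positivity
      calc _ ≤ K * (|τ| + 1) / A ^ 2 * (I + 1) := by nlinarith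
        _ = _ := by ring

theorem isRadialTest_packet {A R : ℝ} (hA : 0 < A) (hR : 2 * A < R) :
    IsRadialTest (packet A R : E → ℂ) := by
  have hR0 : 0 < R := by linarith
  have hsupp : tsupport (packet A R : E → ℂ) ⊆ {x | |(‖x‖ ^ 2 - R ^ 2) / (2 * R)| ≤ A} := by
    refine closure_minimal (fun x hx => ?_) ?_
    · by_contra h
      exact hx (profile_eq_zero hA (not_le.1 h).le)
    · exact isClosed_le (by fun_prop) continuous_const
  refine ⟨?_, ?_, fun h => ?_, fun x y h => by simp only [packet, h]⟩
  · exact (contDiff_profile A).comp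
      (((contDiff_norm_sq ℝ).sub contDiff_const).div_const _)
  · refine HasCompactSupport.of_support_subset_isCompact (isCompact_closedBall (0 : E) (2 * R)) ?_
    intro x hx
    have h1 : |(‖x‖ ^ 2 - R ^ 2) / (2 * R)| ≤ A := hsupp (subset_tsupport _ hx)
    have h2 := (abs_le.1 h1).2
    rw [div_le_iff₀ (by positivity)] at h2
    rw [mem_closedBall_zero_iff]
    nlinarith [norm_nonneg x]
  · have h1 : |(‖(0 : E)‖ ^ 2 - R ^ 2) / (2 * R)| ≤ A := hsupp h
    have := (abs_le.1 h1).1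
    rw [norm_zero, le_div_iff₀ (by positivity)] at this
    nlinarith

theorem tendsto_packet {A : ℝ} {e : E} (he : ‖e‖ = 1) (y : ℝ) (z : E) :
    Tendsto (fun R : ℕ => packet A (R : ℝ) (((R : ℝ) + y) • e - z)) atTop
      (𝓝 (profile A (y - ⟪e, z⟫_ℝ))) := by
  refine ((contDiff_profile A).continuous.tendsto _).comp ?_
  have h1 : Tendsto (fun R : ℕ => (y - ⟪e, z⟫_ℝ) + ‖y • e - z‖ ^ 2 / 2 * ((R : ℝ))⁻¹) atTop
      (𝓝 ((y - ⟪e, z⟫_ℝ) + ‖y • e - z‖ ^ 2 / 2 * 0)) :=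
    (tendsto_inv_atTop_nhds_zero_nat.const_mul _).const_add _
  rw [mul_zero, add_zero] at h1
  refine h1.congr' ?_
  filter_upwards [eventually_gt_atTop 0] with R hR
  have hR' : (0 : ℝ) < R := by exact_mod_cast hR
  have e1 : ((R : ℝ) + y) • e - z = (R : ℝ) • e + (y • e - z) := by rw [add_smul]; abel
  rw [e1, norm_add_sq_real, norm_smul, he, real_inner_smul_left, inner_sub_right,
    real_inner_smul_right, real_inner_self_eq_norm_sq, he, Real.norm_of_nonneg hR'.le]
  field_simp
  ring

/-- Along the ray, a solution with wave packet data is bounded below for a time comparable to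
`A ^ 2`. -/
theorem exists_ray_lower_bound {a : ℝ} (ha : 0 < a) {e : E} (he : ‖e‖ = 1) :
    ∃ δ > 0, 2 * π / a * δ ≤ 1 ∧ ∃ A₀ > 0, ∀ A ≥ A₀, ENNReal.ofReal (δ * A ^ 2 / 4) ≤
      liminf (fun R : ℕ => ∫⁻ y in Set.Ioo 0 (δ * A ^ 2),
        ‖propagate a (fun η => cutoff η * 𝓕 (packet A R : E → ℂ) η) (((R : ℝ) + y) • e)
          (-(2 * π / a * y))‖ₑ ^ 2) atTop := by
  obtain ⟨K, hK, hb⟩ := exists_limit_bound (E := E) ha he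
  set b := 2 * π / a with hbdef
  have hb0 : 0 < b := by positivity
  set δ := min (1 / b) (1 / (4 * K * b)) with hδ
  have hδ0 : 0 < δ := by positivity
  have hδ1 : b * δ ≤ 1 := by
    have := min_le_left (1 / b) (1 / (4 * K * b))
    rw [← hδ, le_div_iff₀ hb0] at this
    linarith
  have hδ2 : K * (b * δ) ≤ 1 / 4 := by
    have := min_le_right (1 / b) (1 / (4 * K * b))
    rw [← hδ, le_div_iff₀ (by positivity)] at this
    linarith
  refine ⟨δ, hδ0, hδ1, 1 + 4 * K, by positivity, fun A hA => ?_⟩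
  have hA0 : 0 < A := by linarith
  have hA1 : 4 * K ≤ A ^ 2 := by nlinarith
  set V : ℕ → ℝ → ℝ≥0∞ := fun R y =>
    ‖propagate a (fun η => cutoff η * 𝓕 (packet A R : E → ℂ) η) (((R : ℝ) + y) • e)
      (-(b * y))‖ₑ ^ 2 with hV
  have hlarge : ∀ᶠ R : ℕ in atTop, 2 * A < (R : ℝ) :=
    tendsto_natCast_atTop_atTop.eventually_gt_atTop _
  have hlow : ∀ y ∈ Set.Ioo 0 (δ * A ^ 2), (1 / 4 : ℝ≥0∞) ≤ liminf (fun R => V R y) atTop := by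
    intro y hy
    obtain ⟨Q, hQ⟩ := exists_kernel (E := E) a (-(b * y))
    have hlim : Tendsto (fun R : ℕ => ∫ z, Q z * packet A (R : ℝ) (((R : ℝ) + y) • e - z)) atTop
        (𝓝 (∫ z, Q z * profile A (y - ⟪e, z⟫_ℝ))) := by
      refine tendsto_integral_of_dominated_convergence (fun z => ‖Q z‖) (fun R => ?_)
        Q.integrable.norm (fun R => ae_of_all _ fun z => ?_) (ae_of_all _ fun z => ?_)
      · have h1 : Continuous fun z : E => packet A (R : ℝ) (((R : ℝ) + y) • e - z) :=
          (contDiff_profile A).continuous.comp (by fun_prop)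
        exact (Q.continuous.mul h1).aestronglyMeasurable
      · rw [norm_mul]
        exact mul_le_of_le_one_right (norm_nonneg _) (norm_profile_le _ _)
      · exact (tendsto_packet he y z).const_mul _
    have hlim2 : Tendsto (fun R => V R y) atTop
        (𝓝 (‖∫ z, Q z * profile A (y - ⟪e, z⟫_ℝ)‖ₑ ^ 2)) := by
      refine ((ENNReal.continuous_pow 2).tendsto _).comp
        ((continuous_enorm.tendsto _).comp (hlim.congr' ?_))
      filter_upwards [hlarge] with R hR
      obtain ⟨f', hf'⟩ := (isRadialTest_packet (E := E) hA0 hR).exists_schwartz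
      exact (propagate_cutoff_eq f' hf' hQ _).symm
    rw [hlim2.liminf_eq]
    have h1 := hb A hA0 y _ rfl Q hQ
    have h2 : K * (|-(b * y)| + 1) / A ^ 2 ≤ 1 / 2 := by
      rw [abs_neg, abs_of_pos (mul_pos hb0 hy.1), div_le_iff₀ (by positivity)]
      have : b * y ≤ b * (δ * A ^ 2) := mul_le_mul_of_nonneg_left hy.2.le hb0.le
      have : K * (b * y) ≤ 1 / 4 * A ^ 2 := by
        calc K * (b * y) ≤ K * (b * (δ * A ^ 2)) := by gcongr
          _ = K * (b * δ) * A ^ 2 := by ring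
          _ ≤ _ := by gcongr
      linarith
    have h3 : (1 / 2 : ℝ) ≤ ‖∫ z, Q z * profile A (y - ⟪e, z⟫_ℝ)‖ := by
      have h4 := norm_sub_norm_le (Complex.exp ((2 * π * y + -(b * y) : ℝ) * Complex.I))
        (∫ z, Q z * profile A (y - ⟪e, z⟫_ℝ))
      rw [norm_sub_rev, Complex.norm_exp_ofReal_mul_I] at h4
      linarith
    rw [← ofReal_norm, ← ENNReal.ofReal_pow (norm_nonneg _)]
    calc (1 / 4 : ℝ≥0∞) = ENNReal.ofReal (1 / 4) := by
          rw [ENNReal.ofReal_div_of_pos (by norm_num)]; simp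
      _ ≤ _ := ENNReal.ofReal_le_ofReal (by nlinarith)
  have hmeas : ∀ᶠ R : ℕ in atTop, Measurable (V R) := by
    filter_upwards [hlarge] with R hR
    obtain ⟨f', hf'⟩ := (isRadialTest_packet (E := E) hA0 hR).exists_schwartz
    have hi : Integrable fun η => cutoff η * 𝓕 (packet A R : E → ℂ) η := by
      rw [hf', ← SchwartzMap.fourier_coe]
      exact (𝓕 f').integrable.bdd_mul (c := 1) contDiff_cutoff.continuous.aestronglyMeasurable
        (ae_of_all _ norm_cutoff_le)
    have := (continuous_propagate ha hi).comp
      (by fun_prop : Continuous fun y : ℝ => (((R : ℝ) + y) • e, -(b * y)))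
    exact this.measurable.enorm.pow_const 2
  obtain ⟨N, hN⟩ := eventually_atTop.1 hmeas
  have hF := lintegral_liminf_le (μ := volume.restrict (Set.Ioo 0 (δ * A ^ 2)))
    (f := fun R => V (R + N)) (u := atTop) (fun R => hN _ (Nat.le_add_left _ _))
  have hsh : ∀ u : ℕ → ℝ≥0∞, liminf (fun R => u (R + N)) atTop = liminf u atTop := fun u =>
    Filter.liminf_nat_add u N
  rw [hsh fun R => ∫⁻ y in Set.Ioo 0 (δ * A ^ 2), V R y] at hF
  refine le_trans ?_ hF
  calc _ = ∫⁻ y in Set.Ioo 0 (δ * A ^ 2), (1 / 4 : ℝ≥0∞) := by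
        rw [setLIntegral_const, Real.volume_Ioo, sub_zero, ENNReal.ofReal_div_of_pos (by norm_num),
          ENNReal.div_eq_inv_mul, one_div]
        simp
    _ ≤ _ := by
        refine setLIntegral_mono' measurableSet_Ioo fun y hy => ?_
        rw [hsh fun R => V R y]
        exact hlow y hy

/-- Smooth functions on the line supported in `[-A, A]` with prescribed derivative bounds. -/
structure DerivBound (A : ℝ) (C : ℕ → ℝ) (h : ℝ → ℂ) : Prop where
  contDiff : ContDiff ℝ ∞ h
  eq_zero : ∀ v, A < |v| → h v = 0
  bound : ∀ j v, ‖iteratedDeriv j h v‖ ≤ C j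

theorem contDiff_iteratedDeriv_of_smooth {h : ℝ → ℂ} (hh : ContDiff ℝ ∞ h) (j : ℕ) :
    ContDiff ℝ ∞ (iteratedDeriv j h) := by
  rw [iteratedDeriv_eq_iterate]
  exact hh.iterate_deriv j

theorem iteratedDeriv_eq_zero_of_lt {A : ℝ} {h : ℝ → ℂ} (hh : ∀ v, A < |v| → h v = 0) (j : ℕ)
    {v : ℝ} (hv : A < |v|) : iteratedDeriv j h v = 0 := by
  have h1 : h =ᶠ[𝓝 v] fun _ => 0 := by
    filter_upwards [(isOpen_lt continuous_const continuous_abs).mem_nhds hv] with w hw using hh w hw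
  rw [h1.iteratedDeriv_eq]
  simp

theorem norm_iteratedDeriv_mul_le' {f g : ℝ → ℂ} (hf : ContDiff ℝ ∞ f) (hg : ContDiff ℝ ∞ g)
    (j : ℕ) (v : ℝ) : ‖iteratedDeriv j (fun w => f w * g w) v‖ ≤
      ∑ i ∈ Finset.range (j + 1), (j.choose i : ℝ) * ‖iteratedDeriv i f v‖
        * ‖iteratedDeriv (j - i) g v‖ := by
  simpa only [norm_iteratedFDeriv_eq_norm_iteratedDeriv] using
    norm_iteratedFDeriv_mul_le hf hg v (n := j) (mod_cast le_top)

theorem exists_derivBound_profile : ∃ C, ∀ A ≥ 1, DerivBound A C (profile A) := by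
  have hs : HasCompactSupport fun v : ℝ => (lineBump v : ℂ) :=
    lineBump.hasCompactSupport.comp_left Complex.ofReal_zero
  have hc : ContDiff ℝ ∞ fun v : ℝ => (lineBump v : ℂ) :=
    Complex.ofRealCLM.contDiff.comp lineBump.contDiff
  have hb : ∀ j, ∃ c, ∀ v, ‖iteratedDeriv j (fun v : ℝ => (lineBump v : ℂ)) v‖ ≤ c := fun j => by
    obtain ⟨c, -, hcb⟩ := (hs.toSchwartzMap hc).decay 0 j
    exact ⟨c, fun v => by
      rw [← norm_iteratedFDeriv_eq_norm_iteratedDeriv]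
      have hv := hcb v
      rwa [funext (hs.toSchwartzMap_toFun hc), pow_zero, one_mul] at hv⟩
  choose c hcb using hb
  have hexp : ∀ j : ℕ, iteratedDeriv j (fun v : ℝ => Complex.exp ((2 * π * v : ℝ) * Complex.I))
      = fun v => (2 * π * Complex.I) ^ j * Complex.exp ((2 * π * v : ℝ) * Complex.I) := fun j => by
    induction j with
    | zero => simp
    | succ j ih =>
      rw [iteratedDeriv_succ, ih]
      funext v
      have h1 : HasDerivAt (fun v : ℝ => ((2 * π * v : ℝ) : ℂ) * Complex.I)
          (2 * π * Complex.I) v := by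
        have := (((hasDerivAt_id v).const_mul (2 * π)).ofReal_comp).mul_const Complex.I
        simpa using this
      rw [(h1.cexp.const_mul _).deriv]
      ring
  have hec : ContDiff ℝ ∞ fun v : ℝ => Complex.exp ((2 * π * v : ℝ) * Complex.I) :=
    ((Complex.ofRealCLM.contDiff.comp (contDiff_const.mul contDiff_id)).mul contDiff_const).cexp
  refine ⟨fun j => ∑ i ∈ Finset.range (j + 1), (j.choose i : ℝ) * (2 * π) ^ i * c (j - i),
    fun A hA => ⟨contDiff_profile A, fun v hv => profile_eq_zero (by linarith) hv.le,
      fun j v => ?_⟩⟩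
  have hd : ContDiff ℝ ∞ fun v : ℝ => (lineBump (v / A) : ℂ) :=
    Complex.ofRealCLM.contDiff.comp (lineBump.contDiff.comp (contDiff_id.div_const A))
  refine (norm_iteratedDeriv_mul_le' hec hd j v).trans (Finset.sum_le_sum fun i _ => ?_)
  have h1 : ‖iteratedDeriv i (fun v : ℝ => Complex.exp ((2 * π * v : ℝ) * Complex.I)) v‖
      = (2 * π) ^ i := by
    rw [hexp]
    simp only [norm_mul, norm_pow, Complex.norm_exp_ofReal_mul_I, Complex.norm_I, Complex.norm_real,
      Complex.norm_ofNat, Real.norm_of_nonneg pi_pos.le, mul_one]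
  have h2 : ‖iteratedDeriv (j - i) (fun v : ℝ => (lineBump (v / A) : ℂ)) v‖ ≤ c (j - i) := by
    have e : (fun v : ℝ => (lineBump (v / A) : ℂ)) = fun v => (lineBump (A⁻¹ * v) : ℂ) := by
      funext v
      rw [div_eq_inv_mul]
    rw [e, iteratedDeriv_comp_const_smul (f := fun v : ℝ => (lineBump v : ℂ))
      (contDiff_infty.1 hc _) A⁻¹, norm_smul]
    have h3 : ‖A⁻¹ ^ (j - i)‖ ≤ 1 := by
      rw [Real.norm_of_nonneg (by positivity)]
      exact pow_le_one₀ (by positivity) (inv_le_one_of_one_le₀ hA)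
    exact (mul_le_of_le_one_left (norm_nonneg _) h3).trans (hcb _ _)
  rw [h1]
  gcongr

/-- The operator on profiles corresponding to `1 - Δ` on radial functions. -/
def radialOp (N ε : ℝ) (h : ℝ → ℂ) (v : ℝ) : ℂ :=
  h v - ((1 + 2 * ε * v : ℝ) * iteratedDeriv 2 h v + (N * ε : ℝ) * iteratedDeriv 1 h v)

theorem exists_derivBound_radialOp (N : ℝ) (C : ℕ → ℝ) : ∃ C', ∀ A > 0, ∀ ε > 0, ε * A ≤ 1 → ε ≤ 1 →
    ∀ h, DerivBound A C h → DerivBound A C' (radialOp N ε h) := by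
  refine ⟨fun j => C j + ((∑ i ∈ Finset.range (j + 1), (j.choose i : ℝ) * 3 * C (j - i + 2))
    + |N| * C (j + 1)), fun A hA ε hε hεA hε1 h hh => ?_⟩
  have hC : ∀ j, 0 ≤ C j := fun j => (norm_nonneg _).trans (hh.bound j 0)
  have hz : ∀ v, A < |v| → radialOp N ε h v = 0 := fun v hv => by
    rw [radialOp, hh.eq_zero v hv, iteratedDeriv_eq_zero_of_lt hh.eq_zero _ hv,
      iteratedDeriv_eq_zero_of_lt hh.eq_zero _ hv]
    ring
  have hl : ContDiff ℝ ∞ fun v : ℝ => ((1 + 2 * ε * v : ℝ) : ℂ) :=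
    Complex.ofRealCLM.contDiff.comp (contDiff_const.add (contDiff_const.mul contDiff_id))
  have hd := contDiff_iteratedDeriv_of_smooth hh.contDiff
  have hm := hl.mul (hd 2)
  have hn : ContDiff ℝ ∞ fun v => ((N * ε : ℝ) : ℂ) * iteratedDeriv 1 h v :=
    contDiff_const.mul (hd 1)
  have hle : ∀ (f : ℝ → ℂ), ContDiff ℝ ∞ f → ∀ (j : ℕ) v, ContDiffAt ℝ j f v := fun f hf j v =>
    (hf.of_le (mod_cast le_top)).contDiffAt
  have hit : ∀ i j : ℕ, iteratedDeriv j (iteratedDeriv i h) = iteratedDeriv (j + i) h := fun i j => by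
    simp only [iteratedDeriv_eq_iterate, Function.iterate_add_apply]
  refine ⟨hh.contDiff.sub (hm.add hn), hz, fun j v => ?_⟩
  rcases lt_or_ge A |v| with hv | hv
  · rw [iteratedDeriv_eq_zero_of_lt hz _ hv, norm_zero]
    have := hC j
    have := hC (j + 1)
    have : 0 ≤ ∑ i ∈ Finset.range (j + 1), (j.choose i : ℝ) * 3 * C (j - i + 2) :=
      Finset.sum_nonneg fun i _ => mul_nonneg (by positivity) (hC _)
    positivity
  have h1 : ‖iteratedDeriv j (fun v => ((1 + 2 * ε * v : ℝ) : ℂ) * iteratedDeriv 2 h v) v‖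
      ≤ ∑ i ∈ Finset.range (j + 1), (j.choose i : ℝ) * 3 * C (j - i + 2) := by
    refine (norm_iteratedDeriv_mul_le' hl (hd 2) j v).trans (Finset.sum_le_sum fun i _ => ?_)
    have h3 : ‖iteratedDeriv i (fun v : ℝ => ((1 + 2 * ε * v : ℝ) : ℂ)) v‖ ≤ 3 := by
      have hdv : deriv (fun v : ℝ => ((1 + 2 * ε * v : ℝ) : ℂ)) = fun _ => ((2 * ε : ℝ) : ℂ) := by
        funext w
        have := ((((hasDerivAt_id w).const_mul (2 * ε)).const_add 1).ofReal_comp).deriv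
        simpa using this
      have hεv : ε * |v| ≤ 1 := (mul_le_mul_of_nonneg_left hv hε.le).trans hεA
      match i with
      | 0 =>
        rw [iteratedDeriv_zero, Complex.norm_real, Real.norm_eq_abs]
        calc |1 + 2 * ε * v| ≤ |1| + |2 * ε * v| := abs_add_le _ _
          _ = 1 + 2 * (ε * |v|) := by
            rw [abs_one, abs_mul, abs_of_pos (by positivity : 0 < 2 * ε)]; ring
          _ ≤ 3 := by linarith
      | 1 =>
        rw [iteratedDeriv_one, hdv, Complex.norm_real, Real.norm_of_nonneg (by positivity)]
        linarith
      | i + 2 =>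
        rw [iteratedDeriv_succ', hdv, iteratedDeriv_const]
        simp
    rw [hit]
    gcongr
    exact hh.bound _ _
  have h2 : ‖iteratedDeriv j (fun v => ((N * ε : ℝ) : ℂ) * iteratedDeriv 1 h v) v‖
      ≤ |N| * C (j + 1) := by
    rw [iteratedDeriv_const_mul _ (hle _ (hd 1) _ _), hit, norm_mul, Complex.norm_real,
      Real.norm_eq_abs, abs_mul, abs_of_pos hε]
    gcongr
    · exact mul_le_of_le_one_right (abs_nonneg _) hε1
    · exact hh.bound _ _
  have e : iteratedDeriv j (radialOp N ε h) v = iteratedDeriv j h v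
      - (iteratedDeriv j (fun v => ((1 + 2 * ε * v : ℝ) : ℂ) * iteratedDeriv 2 h v) v
        + iteratedDeriv j (fun v => ((N * ε : ℝ) : ℂ) * iteratedDeriv 1 h v) v) := by
    unfold radialOp
    rw [iteratedDeriv_fun_sub (hle _ hh.contDiff _ _) (hle _ (hm.add hn) _ _),
      iteratedDeriv_fun_add (hle _ hm _ _) (hle _ hn _ _)]
  rw [e]
  exact (norm_sub_le _ _).trans (add_le_add (hh.bound _ _)
    ((norm_add_le _ _).trans (add_le_add h1 h2)))

/-- The operator `1 - Δ` acts on functions of the shell variable through `radialOp`. -/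
theorem sub_laplacian_apply {h : ℝ → ℂ} (hh : ContDiff ℝ ∞ h) {R : ℝ} (hR : 0 < R) {F : 𝓢(E, ℂ)}
    (hF : ∀ x, F x = h ((‖x‖ ^ 2 - R ^ 2) / (2 * R))) (x : E) :
    (F - Laplacian.laplacian F) x
      = radialOp (Module.finrank ℝ E) R⁻¹ h ((‖x‖ ^ 2 - R ^ 2) / (2 * R)) := by
  have hu : ∀ (x m : E), HasDerivAt (fun t : ℝ => (‖x + t • m‖ ^ 2 - R ^ 2) / (2 * R))
      (⟪x, m⟫_ℝ / R) 0 := fun x m => by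
    have h1 : HasDerivAt (fun t : ℝ => x + t • m) m 0 := by
      simpa using ((hasDerivAt_id (0 : ℝ)).smul_const m).const_add x
    have h2 := (h1.norm_sq.sub_const (R ^ 2)).div_const (2 * R)
    refine h2.congr_deriv ?_
    simp
    field_simp
  have hcomp : ∀ (g : ℝ → ℂ), ContDiff ℝ ∞ g → ∀ x m : E,
      HasDerivAt (fun t : ℝ => g ((‖x + t • m‖ ^ 2 - R ^ 2) / (2 * R)))
        ((⟪x, m⟫_ℝ / R : ℝ) * deriv g ((‖x‖ ^ 2 - R ^ 2) / (2 * R))) 0 := fun g hg x m => by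
    have h1 : HasDerivAt g (deriv g ((‖x‖ ^ 2 - R ^ 2) / (2 * R)))
        ((‖x + (0 : ℝ) • m‖ ^ 2 - R ^ 2) / (2 * R)) := by
      rw [zero_smul, add_zero]
      exact (hg.differentiable (by simp)).differentiableAt.hasDerivAt
    have h2 := h1.scomp (0 : ℝ) (hu x m)
    rwa [Complex.real_smul] at h2
  have hd1 := contDiff_iteratedDeriv_of_smooth hh 1
  rw [iteratedDeriv_one] at hd1
  have hone : ∀ x m : E, (LineDeriv.lineDerivOp m F : 𝓢(E, ℂ)) x
      = (⟪x, m⟫_ℝ / R : ℝ) * deriv h ((‖x‖ ^ 2 - R ^ 2) / (2 * R)) := fun x m => by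
    rw [SchwartzMap.lineDerivOp_apply, lineDeriv]
    simp only [hF]
    exact (hcomp h hh x m).deriv
  have htwo : ∀ m : E, ‖m‖ = 1 →
      (LineDeriv.lineDerivOp m (LineDeriv.lineDerivOp m F) : 𝓢(E, ℂ)) x
      = ((⟪x, m⟫_ℝ / R : ℝ) : ℂ) ^ 2 * iteratedDeriv 2 h ((‖x‖ ^ 2 - R ^ 2) / (2 * R))
        + (R⁻¹ : ℝ) * deriv h ((‖x‖ ^ 2 - R ^ 2) / (2 * R)) := fun m hm => by
    rw [SchwartzMap.lineDerivOp_apply, lineDeriv]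
    simp only [hone]
    have h1 : HasDerivAt (fun t : ℝ => ((⟪x + t • m, m⟫_ℝ / R : ℝ) : ℂ)) ((R⁻¹ : ℝ) : ℂ) 0 := by
      have h2 : HasDerivAt (fun t : ℝ => (⟪x, m⟫_ℝ + t * 1) / R) R⁻¹ 0 := by
        have := (((hasDerivAt_id (0 : ℝ)).mul_const 1).const_add ⟪x, m⟫_ℝ).div_const R
        simpa using this
      simpa only [inner_add_left, real_inner_smul_left, real_inner_self_eq_norm_sq, hm, one_pow]
        using h2.ofReal_comp
    rw [(h1.fun_mul (hcomp _ hd1 x m)).deriv, iteratedDeriv_succ, iteratedDeriv_one]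
    simp only [zero_smul, add_zero]
    ring
  rw [sub_apply, SchwartzMap.laplacian_eq_sum (stdOrthonormalBasis ℝ E)]
  rw [sum_apply, Finset.sum_congr rfl fun i _ =>
    htwo _ ((stdOrthonormalBasis ℝ E).orthonormal.1 i)]
  rw [Finset.sum_add_distrib, ← Finset.sum_mul, Finset.sum_const, Finset.card_univ,
    Fintype.card_fin, hF, radialOp, iteratedDeriv_one]
  have h3 : ∑ i, (((⟪x, stdOrthonormalBasis ℝ E i⟫_ℝ / R : ℝ) : ℂ)) ^ 2
      = ((1 + 2 * R⁻¹ * ((‖x‖ ^ 2 - R ^ 2) / (2 * R)) : ℝ) : ℂ) := by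
    have h4 := (stdOrthonormalBasis ℝ E).sum_sq_inner_left x
    rw [← Finset.sum_congr rfl fun i _ => Complex.ofReal_pow _ 2, ← Complex.ofReal_sum]
    congr 1
    simp_rw [div_pow]
    rw [← Finset.sum_div, h4]
    field_simp
    ring
  rw [h3]
  simp only [nsmul_eq_mul]
  push_cast
  ring

theorem fourier_sub_laplacian (F : 𝓢(E, ℂ)) (η : E) :
    𝓕 (F - Laplacian.laplacian F) η = ((1 + (2 * π * ‖η‖) ^ 2 : ℝ) : ℂ) * 𝓕 F η := by
  have hg : (fun x : E => ‖x‖ ^ 2).HasTemperateGrowth := by fun_prop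
  rw [SchwartzMap.laplacian_eq_fourierMultiplierCLM, SchwartzMap.fourierMultiplierCLM_apply,
    sub_eq_add_neg, ← neg_smul, neg_neg, FourierTransform.fourier_add,
    FourierTransform.fourier_smul, FourierTransform.fourier_fourierInv_eq, add_apply, smul_apply,
    SchwartzMap.smulLeftCLM_apply_apply hg]
  simp only [Complex.real_smul]
  push_cast
  ring

theorem exists_fourier_weight (k : ℕ) (C : ℕ → ℝ) : ∃ B, ∀ A R : ℝ, 1 ≤ A → 2 * A < R →
    ∀ h, DerivBound A C h → ∀ F : 𝓢(E, ℂ), (∀ x, F x = h ((‖x‖ ^ 2 - R ^ 2) / (2 * R))) →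
    ∃ G : 𝓢(E, ℂ),
      (∀ η, (((1 + (2 * π * ‖η‖) ^ 2) ^ k : ℝ) : ℂ) * 𝓕 F η = 𝓕 G η) ∧
      ∀ x, ‖G x‖ ≤ B ∧ (A < |(‖x‖ ^ 2 - R ^ 2) / (2 * R)| → G x = 0) := by
  induction k generalizing C with
  | zero =>
    refine ⟨C 0, fun A R _ _ h hh F hF => ⟨F, fun η => by simp, fun x => ⟨?_, fun hx => ?_⟩⟩⟩
    · rw [hF]
      simpa using hh.bound 0 _
    · rw [hF, hh.eq_zero _ hx]
  | succ k ih =>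
    obtain ⟨C', hC'⟩ := exists_derivBound_radialOp (Module.finrank ℝ E) C
    obtain ⟨B, hB⟩ := ih C'
    refine ⟨B, fun A R hA hR h hh F hF => ?_⟩
    have hR0 : 0 < R := by linarith
    have hε : R⁻¹ * A ≤ 1 := by
      rw [inv_mul_le_iff₀ hR0]
      linarith
    have hh' := hC' A (by linarith) R⁻¹ (by positivity) hε (inv_le_one_of_one_le₀ (by linarith))
      h hh
    obtain ⟨G, hG, hGb⟩ := hB A R hA hR _ hh' (F - Laplacian.laplacian F)
      (sub_laplacian_apply hh.contDiff hR0 hF)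
    refine ⟨G, fun η => ?_, hGb⟩
    rw [← hG, fourier_sub_laplacian, pow_succ, Complex.ofReal_mul]
    ring

/-- A weighted Plancherel bound for wave packets, uniform in the width and in the radius. -/
theorem exists_energy_bound [Nontrivial E] (k : ℕ) : ∃ c > 0, ∀ A R : ℝ, 1 ≤ A → 2 * A < R →
    ∫⁻ η : E, ‖(((1 + (2 * π * ‖η‖) ^ 2) ^ k : ℝ) : ℂ) * 𝓕 (packet A R : E → ℂ) η‖ₑ ^ 2 ≤
      ENNReal.ofReal (c * A) * ((volume : Measure E).toSphere Set.univ *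
        ENNReal.ofReal (R ^ (Module.finrank ℝ E - 1))) := by
  obtain ⟨C, hC⟩ := exists_derivBound_profile
  obtain ⟨B, hB⟩ := exists_fourier_weight (E := E) k C
  set d := Module.finrank ℝ E - 1
  refine ⟨(B ^ 2 + 1) * (3 * 2 ^ d), by positivity, fun A R hA hR => ?_⟩
  have hA0 : 0 < A := by linarith
  have hR0 : 0 < R := by linarith
  obtain ⟨F, hF⟩ := (isRadialTest_packet (E := E) hA0 hR).exists_schwartz
  obtain ⟨G, hG, hGb⟩ := hB A R hA hR _ (hC A hA) F fun x => by rw [← hF, packet]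
  set I := Set.Icc (R - 2 * A) (R + A) with hI
  have hpt : ∀ x : E, ‖G x‖ₑ ^ 2 ≤ I.indicator (fun _ => ENNReal.ofReal (B ^ 2)) ‖x‖ := by
    intro x
    by_cases hx : ‖x‖ ∈ I
    · rw [Set.indicator_of_mem hx, ← ofReal_norm, ← ENNReal.ofReal_pow (norm_nonneg _)]
      exact ENNReal.ofReal_le_ofReal (pow_le_pow_left₀ (norm_nonneg _) (hGb x).1 2)
    · have : A < |(‖x‖ ^ 2 - R ^ 2) / (2 * R)| := by
        by_contra hcon
        have h1 := abs_le.1 (not_lt.1 hcon)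
        rw [le_div_iff₀ (by positivity), div_le_iff₀ (by positivity)] at h1
        have := norm_nonneg x
        exact hx ⟨by nlinarith, by nlinarith⟩
      rw [(hGb x).2 this]
      simp
  have hpl : ∫⁻ η : E, ‖𝓕 (G : E → ℂ) η‖ₑ ^ 2 = ∫⁻ x, ‖G x‖ₑ ^ 2 := by
    have h1 := congrArg (· ^ (2 : ℝ)) (eLpNorm_fourier_eq G.integrable (G.memLp 2))
    have h2 : ∀ f : E → ℂ, eLpNorm f 2 ^ (2 : ℝ) = ∫⁻ x, ‖f x‖ₑ ^ 2 := fun f => by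
      simpa using eLpNorm_nnreal_pow_eq_lintegral (f := f) (μ := volume) (p := 2) two_ne_zero
    simpa only [h2] using h1
  calc _ = ∫⁻ η : E, ‖𝓕 (G : E → ℂ) η‖ₑ ^ 2 := by
        refine lintegral_congr fun η => ?_
        rw [hF, ← SchwartzMap.fourier_coe, ← SchwartzMap.fourier_coe, hG]
    _ = ∫⁻ x, ‖G x‖ₑ ^ 2 := hpl
    _ ≤ ∫⁻ x : E, I.indicator (fun _ => ENNReal.ofReal (B ^ 2)) ‖x‖ := lintegral_mono hpt
    _ = (volume : Measure E).toSphere Set.univ * ∫⁻ y in Set.Ioi (0 : ℝ),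
          ENNReal.ofReal (y ^ d) * I.indicator (fun _ => ENNReal.ofReal (B ^ 2)) y :=
        lintegral_fun_norm (measurable_const.indicator measurableSet_Icc)
    _ ≤ (volume : Measure E).toSphere Set.univ * ∫⁻ y in I,
          ENNReal.ofReal ((2 * R) ^ d) * ENNReal.ofReal (B ^ 2) := by
        refine mul_le_mul_right ?_ _
        rw [← lintegral_indicator (measurableSet_Icc : MeasurableSet I)]
        refine (setLIntegral_le_lintegral _ _).trans (lintegral_mono fun y => ?_)
        by_cases hy : y ∈ I
        · rw [Set.indicator_of_mem hy, Set.indicator_of_mem (show y ∈ Set.Icc _ _ from hy)]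
          have h1 : 0 ≤ y := by linarith [hy.1]
          have h2 : y ≤ 2 * R := by linarith [hy.2]
          exact mul_le_mul_left (ENNReal.ofReal_le_ofReal (pow_le_pow_left₀ h1 h2 d)) _
        · simp [Set.indicator_of_notMem hy]
    _ = (volume : Measure E).toSphere Set.univ *
          ENNReal.ofReal (B ^ 2 * (3 * 2 ^ d) * A * R ^ d) := by
        rw [setLIntegral_const, hI, Real.volume_Icc, ← ENNReal.ofReal_mul (by positivity),
          ← ENNReal.ofReal_mul (by positivity)]
        congr 2
        ring
    _ ≤ (volume : Measure E).toSphere Set.univ *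
          ENNReal.ofReal ((B ^ 2 + 1) * (3 * 2 ^ d) * A * R ^ d) := by
        gcongr
        linarith
    _ = _ := by
        rw [ENNReal.ofReal_mul (by positivity)]
        ring

theorem rpow_bound_contradiction {α β δ κ : ℝ} (hδ : 0 < δ) (hαβ : β < α) {l₀ : ℝ}
    (h : ∀ l ≥ l₀, δ * l ^ α ≤ κ * l ^ β) : False := by
  have h1 := (tendsto_rpow_atTop (sub_pos.2 hαβ)).eventually_gt_atTop (κ / δ)
  obtain ⟨l, hl, hl0, hl1⟩ :=
    (h1.and ((eventually_ge_atTop l₀).and (eventually_gt_atTop 0))).exists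
  have h2 := h l hl0
  have h3 : 0 < l ^ β := rpow_pos_of_pos hl1 _
  rw [rpow_sub hl1, div_lt_div_iff₀ hδ h3] at hl
  linarith

theorem exponent_ge_of_maximal_bound {a : ℝ} (ha : 0 < a) {n : ℕ} (hn : 2 ≤ n) {s C : ℝ}
    (hC : 0 < C) (h : ∀ f : EuclideanSpace ℝ (Fin n) → ℂ, IsRadialTest f →
      (∫ x, (⨆ t : Set.Ioo (-1 : ℝ) 1, ‖Sosc n a f x t‖) ^ 2) ^ (1/2 : ℝ)
        ≤ C * (∫ ξ, (1 + ‖ξ‖ ^ 2) ^ s * ‖FT n f ξ‖ ^ 2) ^ (1/2 : ℝ)) :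
    a / 4 ≤ s := by
  by_contra! hs
  have : NeZero n := ⟨by omega⟩
  set e : EuclideanSpace ℝ (Fin n) := EuclideanSpace.single 0 1
  have he : ‖e‖ = 1 := by simp [e]
  have : Nontrivial (EuclideanSpace ℝ (Fin n)) :=
    ⟨e, 0, fun h0 => by simp [h0] at he⟩
  set σ := max s 0 with hσ
  have hσa : σ < a / 4 := max_lt hs (by positivity)
  obtain ⟨k, hk⟩ := exists_nat_ge σ
  have hσk : σ ≤ 2 * k := by linarith [Nat.cast_nonneg (α := ℝ) k]
  obtain ⟨δ, hδ, hδb, A₀, hA₀, hlow⟩ := exists_ray_lower_bound ha he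
  obtain ⟨c, hc, hen⟩ := exists_energy_bound (E := EuclideanSpace ℝ (Fin n)) k
  obtain ⟨q, hq⟩ := exists_cutoff_kernel (E := EuclideanSpace ℝ (Fin n))
  set Q := ∫ z, ‖q z‖
  have hQ : ∫⁻ z, ‖q z‖ₑ = ENNReal.ofReal Q :=
    (ofReal_integral_norm_eq_lintegral_enorm q.integrable).symm
  have hQ0 : 0 ≤ Q := integral_nonneg fun _ => norm_nonneg _
  set S := (volume : Measure (EuclideanSpace ℝ (Fin n))).toSphere Set.univ with hS
  have hS0 : S ≠ 0 := by
    rw [hS, Ne, Measure.measure_univ_eq_zero]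
    exact Measure.toSphere_ne_zero _
  have hSt : S ≠ ⊤ := measure_ne_top _ _
  set d := Module.finrank ℝ (EuclideanSpace ℝ (Fin n)) - 1
  set κ := Q ^ 2 * (C ^ 2 * (2 * π) ^ n) * c with hκ
  refine rpow_bound_contradiction (α := a / 2) (β := 2 * σ) (δ := δ / 4) (κ := κ)
    (l₀ := max 1 ((max A₀ 1) ^ (2 / a))) (by positivity) (by linarith) fun l hl => ?_
  have hl1 : 1 ≤ l := (le_max_left _ _).trans hl
  have hl0 : 0 < l := by linarith
  set A := l ^ (a / 2) with hA
  have hA' : max A₀ 1 ≤ A := by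
    calc max A₀ 1 = ((max A₀ 1) ^ (2 / a)) ^ (a / 2) := by
          rw [← rpow_mul (by positivity)]
          field_simp
          simp
      _ ≤ A := rpow_le_rpow (by positivity) ((le_max_right _ _).trans hl) (by positivity)
  have hA1 : 1 ≤ A := (le_max_right _ _).trans hA'
  have hA0 : 0 < A := by linarith
  have hAl : A ^ 2 = l ^ a := by
    rw [hA, ← rpow_natCast, ← rpow_mul hl0.le]
    congr 1
    push_cast
    ring
  have hup : ∀ᶠ R : ℕ in atTop, ∫⁻ y in Set.Ioo 0 (δ * A ^ 2),
      ‖propagate a (fun η => cutoff η * 𝓕 (packet A R : EuclideanSpace ℝ (Fin n) → ℂ) η)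
        (((R : ℝ) + y) • e) (-(2 * π / a * y))‖ₑ ^ 2 ≤ ENNReal.ofReal (κ * l ^ (2 * σ) * A) := by
    filter_upwards [tendsto_natCast_atTop_atTop.eventually_gt_atTop (2 * A)] with R hR
    have hR0 : (0 : ℝ) < R := by linarith
    have hf := isRadialTest_packet (E := EuclideanSpace ℝ (Fin n)) hA0 hR
    obtain ⟨φ, hφ⟩ := hf.exists_schwartz
    obtain ⟨M, hMm, hM, hM2⟩ := maximal_bound ha hC h (le_max_left s 0) (le_max_right s 0) hσk
      hl1 hf
    have hray := lintegral_ray_le ha q.integrable q.continuous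
      (F := 𝓕 (packet A R : EuclideanSpace ℝ (Fin n) → ℂ))
      (by rw [hφ, ← SchwartzMap.fourier_coe]; exact (𝓕 φ).integrable)
      (fun x y hxy => fourier_radial hf.radial hxy)
      (fun x y hxy => radial_of_fourier_eq_cutoff hq hxy) hMm hM hR0.le
      (b := 2 * π / a) (D := δ * A ^ 2) (by positivity)
      (by rw [← mul_assoc, ← hAl]; exact mul_le_of_le_one_left (by positivity) hδb) he
    rw [hq] at hray
    set V := ∫⁻ y in Set.Ioo 0 (δ * A ^ 2),
      ‖propagate a (fun η => cutoff η * 𝓕 (packet A R : EuclideanSpace ℝ (Fin n) → ℂ) η)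
        (((R : ℝ) + y) • e) (-(2 * π / a * y))‖ₑ ^ 2
    have hRd : ENNReal.ofReal ((R : ℝ) ^ d) ≠ 0 := by
      rw [Ne, ENNReal.ofReal_eq_zero, not_le]
      positivity
    have hfin : S * ENNReal.ofReal ((R : ℝ) ^ d) * V
        ≤ S * ENNReal.ofReal ((R : ℝ) ^ d) * ENNReal.ofReal (κ * l ^ (2 * σ) * A) := by
      calc _ = S * (ENNReal.ofReal ((R : ℝ) ^ d) * V) := mul_assoc _ _ _
        _ ≤ _ := hray
        _ ≤ ENNReal.ofReal Q ^ 2 * (ENNReal.ofReal (C ^ 2 * (2 * π) ^ n * l ^ (2 * σ)) *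
            (ENNReal.ofReal (c * A) * (S * ENNReal.ofReal ((R : ℝ) ^ d)))) := by
          rw [hQ]
          gcongr
          exact hM2.trans (mul_le_mul_right (hen A R hA1 hR) _)
        _ = S * ENNReal.ofReal ((R : ℝ) ^ d) * (ENNReal.ofReal (Q ^ 2) *
            (ENNReal.ofReal (C ^ 2 * (2 * π) ^ n * l ^ (2 * σ)) * ENNReal.ofReal (c * A))) := by
          rw [ENNReal.ofReal_pow hQ0]
          ring
        _ = _ := by
          rw [← ENNReal.ofReal_mul (by positivity), ← ENNReal.ofReal_mul (by positivity)]
          congr 2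
          rw [hκ]
          ring
    exact (ENNReal.mul_le_mul_iff_right (mul_ne_zero hS0 hRd)
      (ENNReal.mul_ne_top hSt ENNReal.ofReal_ne_top)).1 hfin
  have hlim : ENNReal.ofReal (δ * A ^ 2 / 4) ≤ ENNReal.ofReal (κ * l ^ (2 * σ) * A) :=
    (hlow A ((le_max_left _ _).trans hA')).trans
      (liminf_le_of_frequently_le' hup.frequently)
  have hκ0 : 0 ≤ κ := by positivity
  rw [ENNReal.ofReal_le_ofReal_iff (by positivity)] at hlim
  refine le_of_mul_le_mul_right ?_ hA0
  calc δ / 4 * A * A = δ * A ^ 2 / 4 := by ring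
    _ ≤ _ := hlim

end SchrodingerMaximal

theorem stmt1 (a : ℝ) (ha : 0 < a) (ha1 : a ≠ 1) (n : ℕ) (hn : 2 ≤ n) (s : ℝ)
    (h : ∃ C > 0, ∀ f : EuclideanSpace ℝ (Fin n) → ℂ,
      ContDiff ℝ (⊤ : ℕ∞) f → HasCompactSupport f → 0 ∉ tsupport f →
      (∀ x y : EuclideanSpace ℝ (Fin n), ‖x‖ = ‖y‖ → f x = f y) →
      (∫ x, (⨆ t : Set.Ioo (-1 : ℝ) 1, ‖Sosc n a f x t‖) ^ 2) ^ (1/2 : ℝ)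
        ≤ C * (∫ ξ, (1 + ‖ξ‖ ^ 2) ^ s * ‖FT n f ξ‖ ^ 2) ^ (1/2 : ℝ)) :
    a / 4 ≤ s := by
  obtain ⟨C, hC, hf⟩ := h
  exact exponent_ge_of_maximal_bound ha hn hC fun f hr =>
    hf f hr.contDiff hr.hasCompactSupport hr.zero_notMem hr.radial
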